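/- The set of pairs (x,y) ∈ ℚ × ℚ satisfying y² = (x² + 1)(3x² + 2x − 3)(43x⁶ + 48x⁵ − 81x⁴ − 80x³ + 81x² + 48x − 43) is exactly {(1, 8), (1, −8), (−1, 8), (−1, −8)}. -/

import Mathlib

/-!
Write `x = a / b` in lowest terms and homogenise: the product of the values `α`, `γ`, `Γ` of the
three factors is a square. These values share no primes besides `2`, `5` and `17`, so each is a
square up to such primes.

If `a + b` is odd, congruences leave only `γ = ±5r²`. Then `Γ / 5`, up to a power of `17`, is a
square; as `Γ` is a norm from `ℤ[∛2]`, which has class number one, `3P + 2T∛2` is a square times a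
prime of norm `5`, which contradicts a congruence modulo `17`.

If `a = p - q` and `b = p + q`, the same argument makes
`Γ' = (p² - q² - 4pq)³ - 108 (pq)³` a square. It is the norm of `p² - q² - (4 + 3∛4) pq`, whose
conjugate factors are coprime, so the cofactor is a square as well; this is a point on an elliptic
curve over `ℚ(∛2)`. A descent through its rational 2-torsion point, together with a valuation
argument at the prime `∛2`, forces `pq = 0`.
-/

section Divisibility

variable {R : Type*} [CommRing R]

theorem isUnit_of_forall_prime_not_dvd [UniqueFactorizationMonoid R] {x : R} (hx : x ≠ 0)
    (h : ∀ p, Prime p → ¬ p ∣ x) : IsUnit x := by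
  by_contra hu
  obtain ⟨p, hp, hpx⟩ := WfDvdMonoid.exists_irreducible_factor hu hx
  exact h p hp.prime hpx

theorem exists_eq_mul_of_squarefree_of_prime_dvd {p δ : R} (hδ : Squarefree δ) (hp : Prime p)
    (h : p ∣ δ) : ∃ δ', δ = p * δ' ∧ ¬ p ∣ δ' ∧ Squarefree δ' := by
  obtain ⟨d, rfl⟩ := h
  exact ⟨d, rfl, fun hd => hp.not_isUnit (hδ p (mul_dvd_mul_left p hd)),
    hδ.squarefree_of_dvd (Dvd.intro_left _ rfl)⟩

theorem not_isCoprime_of_prime_dvd {a b p : R} (hp : Prime p) (ha : p ∣ a) (hb : p ∣ b) :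
    ¬ IsCoprime a b :=
  fun h => hp.not_isUnit (h.isUnit_of_dvd' ha hb)

variable [IsDomain R]

theorem exists_eq_sq_of_sq_mul_eq_sq [IsIntegrallyClosed R] {c x y : R} (hc : c ≠ 0)
    (h : c ^ 2 * x = y ^ 2) : ∃ k, x = k ^ 2 := by
  obtain ⟨k, rfl⟩ := (IsIntegrallyClosed.pow_dvd_pow_iff two_ne_zero).1 (Dvd.intro _ h)
  exact ⟨k, mul_left_cancel₀ (pow_ne_zero 2 hc) (h.trans (mul_pow c k 2))⟩

theorem dvd_of_prime_dvd_prime {p q x : R} (hp : Prime p) (hq : Prime q) (h : p ∣ q)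
    (hx : p ∣ x) : q ∣ x :=
  ((hp.dvd_prime_iff_associated hq).1 h).dvd'.trans hx

theorem exists_squarefree_mul_sq [UniqueFactorizationMonoid R] {x : R} (hx : x ≠ 0) :
    ∃ δ m : R, Squarefree δ ∧ x = δ * m ^ 2 := by
  induction x using UniqueFactorizationMonoid.induction_on_prime with
  | h₁ => exact absurd rfl hx
  | h₂ x hu => exact ⟨x, 1, hu.squarefree, by ring⟩
  | h₃ a p ha hp ih =>
    obtain ⟨δ, m, hδ, rfl⟩ := ih ha
    by_cases hpδ : p ∣ δ
    · obtain ⟨d, rfl⟩ := hpδ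
      exact ⟨d, p * m, hδ.squarefree_of_dvd (Dvd.intro_left _ rfl), by ring⟩
    · refine ⟨p * δ, m, squarefree_mul_iff.2 ⟨?_, hp.irreducible.squarefree, hδ⟩, by ring⟩
      exact hp.irreducible.isRelPrime_iff_not_dvd.2 hpδ

theorem exists_eq_mul_isCoprime [IsPrincipalIdealRing R] (a b : R) :
    ∃ g a' b', a = g * a' ∧ b = g * b' ∧ IsCoprime a' b' := by
  classical
  let := IsBezout.toGCDDomain R
  obtain ⟨a', b', ha, hb, hu⟩ := extract_gcd a b
  exact ⟨_, a', b', ha, hb, (gcd_isUnit_iff a' b').1 hu⟩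

end Divisibility

section TwoIsogenyDescent

variable {R : Type*} [CommRing R] [IsDomain R] [IsPrincipalIdealRing R]

-- The `x`-coordinate `a / b` of a point of `Y² = X (X² + A X + B)` has a square denominator,
-- since `b` is coprime to `a (a² + A a b + B b²)` once `a / b` is in lowest terms.
theorem exists_mul_sq_eq_mul_of_mul_cubic_eq_sq {A B a b z : R} (hb : b ≠ 0)
    (h : a * b * (a ^ 2 + A * a * b + B * b ^ 2) = z ^ 2) :
    ∃ n e w : R, IsCoprime n e ∧ e ≠ 0 ∧ a * e ^ 2 = n * b ∧
      n * (n ^ 2 + A * n * e ^ 2 + B * e ^ 4) = w ^ 2 := by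
  obtain ⟨g, a, b, rfl, rfl, hab⟩ := exists_eq_mul_isCoprime a b
  have hg : g ≠ 0 := left_ne_zero_of_mul hb
  obtain ⟨z, hz⟩ := exists_eq_sq_of_sq_mul_eq_sq (c := g ^ 2) (pow_ne_zero 2 hg)
    (x := b * (a * (a ^ 2 + b * (A * a + B * b)))) (by rw [← h]; ring)
  have hcop : IsCoprime b (a * (a ^ 2 + b * (A * a + B * b))) :=
    hab.symm.mul_right (hab.symm.pow_right.add_mul_left_right _)
  obtain ⟨e, u, rfl⟩ := exists_associated_pow_of_mul_eq_pow' hcop hz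
  have he : e ≠ 0 := by rintro rfl; simp at hb
  have hu : (u : R) * ↑u⁻¹ = 1 := u.mul_inv
  obtain ⟨n, rfl⟩ : ∃ n, a = u * n := ⟨↑u⁻¹ * a, by rw [← mul_assoc, hu, one_mul]⟩
  obtain ⟨w, hw⟩ := exists_eq_sq_of_sq_mul_eq_sq (c := (u : R) ^ 2 * e)
    (mul_ne_zero (pow_ne_zero 2 u.ne_zero) he)
    (x := n * (n ^ 2 + A * n * e ^ 2 + B * e ^ 4)) (by rw [← hz]; ring)
  refine ⟨n, e, w, ?_, he, by ring, hw⟩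
  exact ((IsCoprime.pow_right_iff two_pos).1 hab.of_mul_right_left).of_mul_left_right

theorem exists_descent_quartic {A B n e w : R} (hn : n ≠ 0) (hne : IsCoprime n e)
    (h : n * (n ^ 2 + A * n * e ^ 2 + B * e ^ 4) = w ^ 2) :
    ∃ δ B' m N : R, Squarefree δ ∧ δ * B' = B ∧ n = δ * m ^ 2 ∧
      N ^ 2 = δ * m ^ 4 + A * m ^ 2 * e ^ 2 + B' * e ^ 4 := by
  obtain ⟨δ, m, hδ, rfl⟩ := exists_squarefree_mul_sq hn
  have hm : m ≠ 0 := by rintro rfl; simp at hn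
  have hδe : IsCoprime δ e := hne.of_mul_left_left
  obtain ⟨v, hv⟩ := exists_eq_sq_of_sq_mul_eq_sq hm
    (x := δ * (δ ^ 2 * m ^ 4 + A * δ * m ^ 2 * e ^ 2 + B * e ^ 4)) (by rw [← h]; ring)
  obtain ⟨N, rfl⟩ : δ ∣ v := (hδ.dvd_pow_iff_dvd two_ne_zero).1 ⟨_, hv.symm⟩
  have hN : δ ^ 2 * m ^ 4 + A * δ * m ^ 2 * e ^ 2 + B * e ^ 4 = δ * N ^ 2 :=
    mul_left_cancel₀ hδ.ne_zero (by rw [hv]; ring)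
  obtain ⟨B', rfl⟩ : δ ∣ B := hδe.pow_right.dvd_of_dvd_mul_right
    (⟨N ^ 2 - δ * m ^ 4 - A * m ^ 2 * e ^ 2, by linear_combination hN⟩ : δ ∣ B * e ^ 4)
  exact ⟨δ, B', m, N, hδ, rfl, rfl, mul_left_cancel₀ hδ.ne_zero (by linear_combination -hN)⟩

theorem exists_two_isogeny_descent {A B a b z : R} (ha : a ≠ 0) (hb : b ≠ 0)
    (h : a * b * (a ^ 2 + A * a * b + B * b ^ 2) = z ^ 2) :
    ∃ δ B' m e N : R, Squarefree δ ∧ δ * B' = B ∧ IsCoprime m e ∧ m ≠ 0 ∧ e ≠ 0 ∧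
      a * e ^ 2 = δ * m ^ 2 * b ∧ N ^ 2 = δ * m ^ 4 + A * m ^ 2 * e ^ 2 + B' * e ^ 4 := by
  obtain ⟨n, e, w, hne, he, hae, hw⟩ := exists_mul_sq_eq_mul_of_mul_cubic_eq_sq hb h
  have hn : n ≠ 0 := by
    rintro rfl
    simp [ha, he] at hae
  obtain ⟨δ, B', m, N, hδ, hB, rfl, hN⟩ := exists_descent_quartic hn hne hw
  have hm : m ≠ 0 := by rintro rfl; simp at hn
  exact ⟨δ, B', m, e, N, hδ, hB, (IsCoprime.pow_left_iff two_pos).1 hne.of_mul_left_right, hm, he,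
    hae, hN⟩

end TwoIsogenyDescent

/-- The ring `R[t] / (t³ - 2)`; the element `a + b t + c t²` is stored as its coordinates, so that
identities between explicit elements are decidable. -/
@[ext] structure CbrtTwo (R : Type*) where
  a : R
  b : R
  c : R

namespace CbrtTwo

section Ring

variable {R S : Type*} [CommRing R] [CommRing S]

instance : Zero (CbrtTwo R) := ⟨⟨0, 0, 0⟩⟩
instance : One (CbrtTwo R) := ⟨⟨1, 0, 0⟩⟩
instance : Add (CbrtTwo R) := ⟨fun x y => ⟨x.a + y.a, x.b + y.b, x.c + y.c⟩⟩
instance : Neg (CbrtTwo R) := ⟨fun x => ⟨-x.a, -x.b, -x.c⟩⟩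
instance : Sub (CbrtTwo R) := ⟨fun x y => ⟨x.a - y.a, x.b - y.b, x.c - y.c⟩⟩
instance : Mul (CbrtTwo R) := ⟨fun x y => ⟨x.a * y.a + 2 * (x.b * y.c + x.c * y.b),
  x.a * y.b + x.b * y.a + 2 * (x.c * y.c), x.a * y.c + x.b * y.b + x.c * y.a⟩⟩
instance : NatCast (CbrtTwo R) := ⟨fun n => ⟨n, 0, 0⟩⟩
instance : IntCast (CbrtTwo R) := ⟨fun n => ⟨n, 0, 0⟩⟩

@[simp] theorem zero_a : (0 : CbrtTwo R).a = 0 := rfl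
@[simp] theorem zero_b : (0 : CbrtTwo R).b = 0 := rfl
@[simp] theorem zero_c : (0 : CbrtTwo R).c = 0 := rfl
@[simp] theorem one_a : (1 : CbrtTwo R).a = 1 := rfl
@[simp] theorem one_b : (1 : CbrtTwo R).b = 0 := rfl
@[simp] theorem one_c : (1 : CbrtTwo R).c = 0 := rfl
@[simp] theorem add_a (x y : CbrtTwo R) : (x + y).a = x.a + y.a := rfl
@[simp] theorem add_b (x y : CbrtTwo R) : (x + y).b = x.b + y.b := rfl
@[simp] theorem add_c (x y : CbrtTwo R) : (x + y).c = x.c + y.c := rfl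
@[simp] theorem sub_a (x y : CbrtTwo R) : (x - y).a = x.a - y.a := rfl
@[simp] theorem sub_b (x y : CbrtTwo R) : (x - y).b = x.b - y.b := rfl
@[simp] theorem sub_c (x y : CbrtTwo R) : (x - y).c = x.c - y.c := rfl
@[simp] theorem neg_a (x : CbrtTwo R) : (-x).a = -x.a := rfl
@[simp] theorem neg_b (x : CbrtTwo R) : (-x).b = -x.b := rfl
@[simp] theorem neg_c (x : CbrtTwo R) : (-x).c = -x.c := rfl
@[simp] theorem mul_a (x y : CbrtTwo R) :
    (x * y).a = x.a * y.a + 2 * (x.b * y.c + x.c * y.b) := rfl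
@[simp] theorem mul_b (x y : CbrtTwo R) :
    (x * y).b = x.a * y.b + x.b * y.a + 2 * (x.c * y.c) := rfl
@[simp] theorem mul_c (x y : CbrtTwo R) :
    (x * y).c = x.a * y.c + x.b * y.b + x.c * y.a := rfl
@[simp] theorem natCast_a (n : ℕ) : (n : CbrtTwo R).a = n := rfl
@[simp] theorem natCast_b (n : ℕ) : (n : CbrtTwo R).b = 0 := rfl
@[simp] theorem natCast_c (n : ℕ) : (n : CbrtTwo R).c = 0 := rfl
@[simp] theorem intCast_a (n : ℤ) : (n : CbrtTwo R).a = n := rfl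
@[simp] theorem intCast_b (n : ℤ) : (n : CbrtTwo R).b = 0 := rfl
@[simp] theorem intCast_c (n : ℤ) : (n : CbrtTwo R).c = 0 := rfl

instance : CommRing (CbrtTwo R) where
  add_assoc x y z := by ext <;> simp <;> ring
  zero_add x := by ext <;> simp
  add_zero x := by ext <;> simp
  add_comm x y := by ext <;> simp <;> ring
  left_distrib x y z := by ext <;> simp <;> ring
  right_distrib x y z := by ext <;> simp <;> ring
  zero_mul x := by ext <;> simp
  mul_zero x := by ext <;> simp
  mul_assoc x y z := by ext <;> simp <;> ring
  one_mul x := by ext <;> simp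
  mul_one x := by ext <;> simp
  neg_add_cancel x := by ext <;> simp
  mul_comm x y := by ext <;> simp <;> ring
  sub_eq_add_neg x y := by ext <;> simp <;> ring
  nsmul := nsmulRec
  zsmul := zsmulRec
  natCast_zero := by ext <;> simp
  natCast_succ n := by ext <;> simp
  intCast_ofNat n := by ext <;> simp
  intCast_negSucc n := by ext <;> simp

@[simp] theorem ofNat_a (n : ℕ) [n.AtLeastTwo] : (ofNat(n) : CbrtTwo R).a = ofNat(n) := by
  have : (ofNat(n) : CbrtTwo R) = ((n : ℕ) : CbrtTwo R) := rfl
  rw [this]; simp only [natCast_a]; rfl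
@[simp] theorem ofNat_b (n : ℕ) [n.AtLeastTwo] : (ofNat(n) : CbrtTwo R).b = 0 := rfl
@[simp] theorem ofNat_c (n : ℕ) [n.AtLeastTwo] : (ofNat(n) : CbrtTwo R).c = 0 := rfl

/-- The norm of `a + b t + c t²` down to `R`. -/
def norm (x : CbrtTwo R) : R := x.a ^ 3 + 2 * x.b ^ 3 + 4 * x.c ^ 3 - 6 * x.a * x.b * x.c

@[simp] theorem norm_zero : norm (0 : CbrtTwo R) = 0 := by simp [norm]

@[simp] theorem norm_one : norm (1 : CbrtTwo R) = 1 := by simp [norm]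

@[simp] theorem norm_neg (x : CbrtTwo R) : norm (-x) = -norm x := by
  simp only [norm, neg_a, neg_b, neg_c]; ring

theorem norm_mul (x y : CbrtTwo R) : norm (x * y) = norm x * norm y := by
  simp only [norm, mul_a, mul_b, mul_c]; ring

/-- The product of the two other conjugates of `x`, that is `norm x / x`. -/
def cofactor (x : CbrtTwo R) : CbrtTwo R :=
  ⟨x.a ^ 2 - 2 * x.b * x.c, 2 * x.c ^ 2 - x.a * x.b, x.b ^ 2 - x.a * x.c⟩

theorem mul_cofactor (x : CbrtTwo R) : x * cofactor x = ⟨norm x, 0, 0⟩ := by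
  ext <;> simp [cofactor, norm] <;> ring

/-- Base change of `R[t] / (t³ - 2)` along a ring homomorphism. -/
def map (f : R →+* S) : CbrtTwo R →+* CbrtTwo S where
  toFun x := ⟨f x.a, f x.b, f x.c⟩
  map_one' := by ext <;> simp
  map_mul' x y := by ext <;> simp [map_ofNat f 2]
  map_zero' := by ext <;> simp
  map_add' x y := by ext <;> simp

theorem norm_map (f : R →+* S) (x : CbrtTwo R) : norm (map f x) = f (norm x) := by
  simp [norm, map, map_ofNat f 2, map_ofNat f 4, map_ofNat f 6]

/-- The homomorphism sending `t` to a given cube root of two. -/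
def evalHom (f : R →+* S) (t : S) (ht : t ^ 3 = 2) : CbrtTwo R →+* S where
  toFun x := f x.a + f x.b * t + f x.c * t ^ 2
  map_one' := by simp
  map_mul' x y := by
    simp only [mul_a, mul_b, mul_c, map_add, map_mul, map_ofNat]
    linear_combination (-(f x.b * f y.c + f x.c * f y.b) - f x.c * f y.c * t) * ht
  map_zero' := by simp
  map_add' x y := by simp only [add_a, add_b, add_c, map_add]; ring

end Ring

instance {R : Type*} [DecidableEq R] : DecidableEq (CbrtTwo R) := fun x y =>
  decidable_of_iff (x.a = y.a ∧ x.b = y.b ∧ x.c = y.c) CbrtTwo.ext_iff.symm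

/-- `ℤ[∛2]`, the ring of integers of the cubic field of discriminant `-108`. -/
abbrev ZCbrtTwo := CbrtTwo ℤ

section Euclidean

theorem exists_eq_two_mul_of_norm_form_eq_zero {a b c : ℤ}
    (h : a ^ 3 + 2 * b ^ 3 + 4 * c ^ 3 - 6 * a * b * c = 0) :
    ∃ a', a = 2 * a' ∧ b ^ 3 + 2 * c ^ 3 + 4 * a' ^ 3 - 6 * b * c * a' = 0 := by
  have ha : (2 : ℤ) ∣ a ^ 3 := ⟨-(b ^ 3 + 2 * c ^ 3 - 3 * a * b * c), by linarith⟩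
  obtain ⟨a', rfl⟩ := Int.prime_two.dvd_of_dvd_pow ha
  exact ⟨a', rfl, by linarith⟩

theorem eq_zero_of_norm_eq_zero {x : ZCbrtTwo} (h : norm x = 0) : x = 0 := by
  induction hn : x.a.natAbs + x.b.natAbs + x.c.natAbs using Nat.strong_induction_on
    generalizing x with
  | _ n ih =>
    obtain ⟨a, b, c⟩ := x
    obtain ⟨a', rfl, ha⟩ := exists_eq_two_mul_of_norm_form_eq_zero h
    obtain ⟨b', rfl, hb⟩ := exists_eq_two_mul_of_norm_form_eq_zero ha
    obtain ⟨c', rfl, hc⟩ := exists_eq_two_mul_of_norm_form_eq_zero hb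
    by_contra hx
    have hne : ¬ (a' = 0 ∧ b' = 0 ∧ c' = 0) := by
      rintro ⟨rfl, rfl, rfl⟩
      exact hx rfl
    have hz := CbrtTwo.ext_iff.1 (ih (a'.natAbs + b'.natAbs + c'.natAbs)
      (by simp only at hn; omega) (x := ⟨a', b', c'⟩) hc rfl)
    exact hne hz

theorem norm_ne_zero {x : ZCbrtTwo} (hx : x ≠ 0) : norm x ≠ 0 :=
  fun h => hx (eq_zero_of_norm_eq_zero h)

instance : Nontrivial ZCbrtTwo := ⟨0, 1, by decide⟩

instance : NoZeroDivisors ZCbrtTwo where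
  eq_zero_or_eq_zero_of_mul_eq_zero {x y} h := by
    have hxy : norm x * norm y = 0 := by rw [← norm_mul, h, norm_zero]
    exact (mul_eq_zero.1 hxy).imp eq_zero_of_norm_eq_zero eq_zero_of_norm_eq_zero

theorem cube_mem_Icc {t : ℝ} (h0 : 0 ≤ t) (h : t ≤ 1 / 2) : 0 ≤ t ^ 3 ∧ t ^ 3 ≤ 1 / 8 :=
  ⟨by positivity, (pow_le_pow_left₀ h0 h 3).trans (by norm_num)⟩

theorem abs_norm_lt_one_or_of_nonneg {t b c : ℝ} (ht : 0 ≤ t) (ht' : t ≤ 1 / 2) (hb : 0 ≤ b)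
    (hb' : b ≤ 1 / 2) (hc : 0 ≤ c) (hc' : c ≤ 1 / 2) :
    |norm ⟨-t, b, c⟩| < 1 ∨ |norm ⟨1 - t, b, c⟩| < 1 := by
  simp only [norm]
  obtain ⟨-, t3⟩ := cube_mem_Icc ht ht'
  obtain ⟨hb3, b3⟩ := cube_mem_Icc hb hb'
  obtain ⟨hc3, c3⟩ := cube_mem_Icc hc hc'
  have hbc : b * c ≤ 1 / 4 := by nlinarith
  have : 0 ≤ b * c := by positivity
  have htbc : 0 ≤ t * (b * c) := by positivity
  by_contra! ⟨h1, h2⟩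
  have h1' : 1 ≤ (-t) ^ 3 + 2 * b ^ 3 + 4 * c ^ 3 - 6 * (-t) * b * c :=
    (le_abs.1 h1).resolve_right fun h => by nlinarith
  have : 0 ≤ (1 - t) ^ 3 := pow_nonneg (by linarith) 3
  have h2' : 1 ≤ (1 - t) ^ 3 + 2 * b ^ 3 + 4 * c ^ 3 - 6 * (1 - t) * b * c :=
    (le_abs.1 h2).resolve_right fun h => by nlinarith
  -- The weights `1 - t` and `t` cancel the mixed term `6 a b c`.
  have hsum : 1 ≤ t * (1 - t) * (1 - 2 * t) + 2 * b ^ 3 + 4 * c ^ 3 := by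
    linarith [mul_le_mul_of_nonneg_left h1' (show 0 ≤ 1 - t by linarith),
      mul_le_mul_of_nonneg_left h2' ht]
  nlinarith [mul_nonneg ht ht, mul_nonneg ht (show 0 ≤ 1 - 2 * t by linarith),
    sq_nonneg (t - 1 / 4)]

theorem abs_norm_lt_one_or_of_neg {a s c : ℝ} (ha : 0 ≤ a) (ha' : a ≤ 1 / 2) (hs : 0 ≤ s)
    (hs' : s ≤ 1 / 2) (hc : 0 ≤ c) (hc' : c ≤ 1 / 2) :
    |norm ⟨a, -s, c⟩| < 1 ∨ |norm ⟨a - 1, -s, c⟩| < 1 := by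
  simp only [norm]
  obtain ⟨a0, _⟩ := cube_mem_Icc ha ha'
  obtain ⟨s0, s3⟩ := cube_mem_Icc hs hs'
  obtain ⟨c0, c3⟩ := cube_mem_Icc hc hc'
  have hsc : s * c ≤ 1 / 4 := by nlinarith
  have hsc0 : 0 ≤ s * c := by positivity
  have hasc : 0 ≤ a * (s * c) := by positivity
  by_contra! ⟨h1, h2⟩
  have h1' : 1 ≤ a ^ 3 + 6 * a * (s * c) + 4 * c ^ 3 - 2 * s ^ 3 := by
    rcases le_abs.1 h1 with h | h <;> nlinarith
  set t := 1 - a with ht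
  have t3 : 0 ≤ t ^ 3 := pow_nonneg (by linarith) 3
  have htsc : 0 ≤ t * (s * c) := mul_nonneg (by linarith) hsc0
  have : (a - 1) ^ 3 = -t ^ 3 := by rw [ht]; ring
  have h2' : 1 ≤ t ^ 3 + 6 * t * (s * c) - 4 * c ^ 3 + 2 * s ^ 3 := by
    rcases le_abs.1 h2 with h | h <;> nlinarith
  rcases le_total a (3 / 10) with h | h
  · have : a ^ 3 ≤ (3 / 10) ^ 3 := by gcongr
    have : a * (s * c) ≤ 3 / 10 * (1 / 4) := by gcongr
    linarith
  · have : a ^ 3 + t ^ 3 = 1 - 3 * (a * (1 - a)) := by rw [ht]; ring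
    have : a * (s * c) + t * (s * c) = s * c := by rw [ht]; ring
    nlinarith

theorem abs_norm_lt_one_of_nonneg {a b c : ℝ} (ha : 0 ≤ a) (ha' : a ≤ 1 / 2) (hb : 0 ≤ b)
    (hb' : b ≤ 1 / 2) (hc : 0 ≤ c) (hc' : c ≤ 1 / 2) : |norm ⟨a, b, c⟩| < 1 := by
  obtain ⟨_, _⟩ := cube_mem_Icc ha ha'
  obtain ⟨_, _⟩ := cube_mem_Icc hb hb'
  obtain ⟨_, _⟩ := cube_mem_Icc hc hc'
  have h0 : 0 ≤ a * b * c := by positivity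
  have h1 : a * b * c ≤ 1 / 2 * (1 / 2) * (1 / 2) := by gcongr
  simp only [norm, abs_lt]
  constructor <;> nlinarith

theorem abs_norm_lt_one_of_neg_neg {r s c : ℝ} (hr : 0 ≤ r) (hr' : r ≤ 1 / 2) (hs : 0 ≤ s)
    (hs' : s ≤ 1 / 2) (hc : 0 ≤ c) (hc' : c ≤ 1 / 2) : |norm ⟨-r, -s, c⟩| < 1 := by
  obtain ⟨_, _⟩ := cube_mem_Icc hr hr'
  obtain ⟨_, _⟩ := cube_mem_Icc hs hs'
  obtain ⟨_, _⟩ := cube_mem_Icc hc hc'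
  have h0 : 0 ≤ r * s * c := by positivity
  have h1 : r * s * c ≤ 1 / 2 * (1 / 2) * c := by gcongr
  have h2 : -(6 / 10) ≤ 4 * c ^ 3 - 3 / 2 * c := by
    nlinarith [mul_nonneg hc (sq_nonneg (c - 35 / 100)), sq_nonneg (c - 35 / 100)]
  simp only [norm, abs_lt]
  constructor <;> nlinarith

theorem exists_abs_norm_sub_int_lt_one {a b c : ℝ} (ha : |a| ≤ 1 / 2) (hb : |b| ≤ 1 / 2)
    (hc : 0 ≤ c) (hc' : c ≤ 1 / 2) : ∃ n : ℤ, |norm ⟨a - n, b, c⟩| < 1 := by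
  obtain ⟨ha, ha'⟩ := abs_le.1 ha
  obtain ⟨hb, hb'⟩ := abs_le.1 hb
  rcases le_total 0 b with hb0 | hb0 <;> rcases le_total 0 a with ha0 | ha0
  · exact ⟨0, by simpa using abs_norm_lt_one_of_nonneg ha0 ha' hb0 hb' hc hc'⟩
  · rcases abs_norm_lt_one_or_of_nonneg (neg_nonneg.2 ha0) (by linarith) hb0 hb' hc hc' with h | h
    · exact ⟨0, by simpa using h⟩
    · exact ⟨-1, by simpa [add_comm] using h⟩
  · rcases abs_norm_lt_one_or_of_neg ha0 ha' (neg_nonneg.2 hb0) (by linarith) hc hc' with h | h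
    · exact ⟨0, by simpa using h⟩
    · exact ⟨1, by simpa using h⟩
  · refine ⟨0, ?_⟩
    simpa using abs_norm_lt_one_of_neg_neg (neg_nonneg.2 ha0) (by linarith) (neg_nonneg.2 hb0)
      (by linarith) hc hc'

theorem exists_abs_norm_sub_lt_one (z : CbrtTwo ℝ) :
    ∃ q : ZCbrtTwo, |norm (z - map (Int.castRingHom ℝ) q)| < 1 := by
  have ha := abs_sub_round z.a
  have hb := abs_sub_round z.b
  have hc := abs_le.1 (abs_sub_round z.c)
  rcases le_total 0 (z.c - round z.c) with h | h
  · obtain ⟨n, hn⟩ := exists_abs_norm_sub_int_lt_one ha hb h hc.2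
    refine ⟨⟨round z.a + n, round z.b, round z.c⟩, ?_⟩
    convert hn using 3
    ext <;> simp [map]
    ring
  · rw [← abs_neg] at ha hb
    obtain ⟨n, hn⟩ := exists_abs_norm_sub_int_lt_one ha hb (neg_nonneg.2 h) (by linarith)
    refine ⟨⟨round z.a - n, round z.b, round z.c⟩, ?_⟩
    rw [← abs_neg, ← norm_neg]
    convert hn using 3
    ext <;> simp [map]
    ring

theorem exists_natAbs_norm_sub_mul_lt (x : ZCbrtTwo) {y : ZCbrtTwo} (hy : y ≠ 0) :
    ∃ q : ZCbrtTwo, (norm (x - y * q)).natAbs < (norm y).natAbs := by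
  let φ := map (Int.castRingHom ℝ)
  have hφ (z : ZCbrtTwo) : norm (φ z) = ((norm z : ℤ) : ℝ) := norm_map _ z
  have hN : ((norm y : ℤ) : ℝ) ≠ 0 := by exact_mod_cast norm_ne_zero hy
  let w : CbrtTwo ℝ := φ (cofactor y) * ⟨((norm y : ℤ) : ℝ)⁻¹, 0, 0⟩
  have hyw : φ y * w = 1 := by
    rw [← mul_assoc, ← _root_.map_mul, mul_cofactor]
    ext <;> simp [φ, map, hN]
  obtain ⟨q, hq⟩ := exists_abs_norm_sub_lt_one (φ x * w)
  refine ⟨q, ?_⟩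
  have hsub : φ (x - y * q) = φ y * (φ x * w - φ q) := by
    rw [map_sub, _root_.map_mul]
    linear_combination (-φ x) * hyw
  have hlt : |((norm (x - y * q) : ℤ) : ℝ)| < |((norm y : ℤ) : ℝ)| := by
    rw [← hφ, ← hφ, hsub, norm_mul, abs_mul]
    exact mul_lt_of_lt_one_right (abs_pos.2 (by rwa [hφ])) hq
  rw [← Nat.cast_lt (α := ℤ), Int.natCast_natAbs, Int.natCast_natAbs]
  exact_mod_cast hlt

noncomputable instance : EuclideanDomain ZCbrtTwo :=
  { (inferInstance : CommRing ZCbrtTwo), (inferInstance : Nontrivial ZCbrtTwo) with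
    quotient := fun x y => by
      classical exact if h : y = 0 then 0 else (exists_natAbs_norm_sub_mul_lt x h).choose
    quotient_zero := fun x => by simp
    remainder := fun x y => by
      classical exact
        x - y * (if h : y = 0 then 0 else (exists_natAbs_norm_sub_mul_lt x h).choose)
    quotient_mul_add_remainder_eq := fun x y => by simp
    r := fun x y => (norm x).natAbs < (norm y).natAbs
    r_wellFounded := (measure fun x : ZCbrtTwo => (norm x).natAbs).wf
    remainder_lt := fun x y hy => by
      simpa [hy] using (exists_natAbs_norm_sub_mul_lt x hy).choose_spec
    mul_left_not_lt := fun x y hy => by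
      rw [norm_mul, Int.natAbs_mul, not_lt]
      exact Nat.le_mul_of_pos_right _ (Int.natAbs_pos.2 (norm_ne_zero hy)) }

end Euclidean

section Units

/-- The fundamental unit `∛2 - 1` of `ℤ[∛2]`. -/
def ε : ZCbrtTwo := ⟨-1, 1, 0⟩

/-- `ε` as a unit, with inverse `1 + ∛2 + ∛4`. -/
def εUnit : ZCbrtTwoˣ := ⟨ε, ⟨1, 1, 1⟩, by decide, by decide⟩

/-- The real cube root of two. -/
noncomputable def ρ : ℝ := (2 : ℝ) ^ ((1 : ℝ) / 3)

theorem ρ_pos : 0 < ρ := by unfold ρ; positivity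

theorem ρ_cube : ρ ^ 3 = 2 := by
  rw [ρ, ← Real.rpow_natCast, ← Real.rpow_mul (by norm_num)]
  norm_num

theorem lt_ρ : 1.2599 < ρ :=
  lt_of_pow_lt_pow_left₀ 3 ρ_pos.le (by rw [ρ_cube]; norm_num)

theorem ρ_lt : ρ < 1.26 :=
  lt_of_pow_lt_pow_left₀ 3 (by norm_num) (by rw [ρ_cube]; norm_num)

/-- The real embedding of `ℤ[∛2]`. -/
noncomputable def toReal : ZCbrtTwo →+* ℝ := evalHom (Int.castRingHom ℝ) ρ ρ_cube

theorem toReal_apply (x : ZCbrtTwo) : toReal x = x.a + x.b * ρ + x.c * ρ ^ 2 := rfl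

/-- Twice the squared absolute value of the image of `x` under a non-real embedding. -/
noncomputable def twiceNormSq (x : ZCbrtTwo) : ℝ :=
  (x.a - x.b * ρ) ^ 2 + (x.b * ρ - x.c * ρ ^ 2) ^ 2 + (x.a - x.c * ρ ^ 2) ^ 2

theorem twiceNormSq_nonneg (x : ZCbrtTwo) : 0 ≤ twiceNormSq x := by
  unfold twiceNormSq; positivity

theorem toReal_mul_twiceNormSq (x : ZCbrtTwo) : toReal x * twiceNormSq x = 2 * (norm x : ℤ) := by
  rw [toReal_apply, twiceNormSq, norm]
  push_cast
  linear_combination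
    (2 * (x.b : ℝ) ^ 3 + 2 * (x.c : ℝ) ^ 3 * (ρ ^ 3 + 2) - 6 * x.a * x.b * x.c) * ρ_cube

theorem toReal_pos_of_norm_pos {x : ZCbrtTwo} (h : 0 < norm x) : 0 < toReal x := by
  have : (0 : ℝ) < (norm x : ℤ) := by exact_mod_cast h
  refine pos_of_mul_pos_left ?_ (twiceNormSq_nonneg x)
  rw [toReal_mul_twiceNormSq]
  positivity

theorem norm_pos_of_toReal_pos {x : ZCbrtTwo} (h : 0 < toReal x) : 0 < norm x := by
  have hx : x ≠ 0 := by rintro rfl; simp at h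
  have h' : (0 : ℝ) ≤ (norm x : ℤ) := by
    linarith [mul_nonneg h.le (twiceNormSq_nonneg x), toReal_mul_twiceNormSq x]
  exact lt_of_le_of_ne (by exact_mod_cast h') (norm_ne_zero hx).symm

theorem toReal_ne_zero {x : ZCbrtTwo} (h : x ≠ 0) : toReal x ≠ 0 := by
  intro h0
  have h1 := toReal_mul_twiceNormSq x
  rw [h0, zero_mul, zero_eq_mul, Int.cast_eq_zero] at h1
  exact norm_ne_zero h (h1.resolve_left two_ne_zero)

theorem coeff_mem_Icc_of_one_le_toReal {x : ZCbrtTwo} (hn : norm x = 1) (h1 : 1 ≤ toReal x)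
    (h2 : toReal x < 1 + ρ + ρ ^ 2) :
    x.a ∈ Set.Icc 0 2 ∧ x.b ∈ Set.Icc (-1) 3 ∧ x.c ∈ Set.Icc (-1) 2 := by
  have hq : twiceNormSq x ≤ 2 := by
    have := toReal_mul_twiceNormSq x
    rw [hn, Int.cast_one] at this
    nlinarith [twiceNormSq_nonneg x]
  have l1 := lt_ρ
  have l2 := ρ_lt
  have l3 : 1.5873 < ρ ^ 2 := by nlinarith
  have l4 : ρ ^ 2 < 1.5876 := by nlinarith
  rw [toReal_apply] at h1 h2
  rw [twiceNormSq] at hq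
  obtain ⟨a, b, c⟩ := x
  simp only [Set.mem_Icc] at *
  set s := ρ ^ 2
  obtain ⟨b1, b2⟩ : -1.415 ≤ (a : ℝ) - b * ρ ∧ (a : ℝ) - b * ρ ≤ 1.415 := by
    refine abs_le.1 (abs_le_of_sq_le_sq ?_ (by norm_num))
    linarith [sq_nonneg ((b : ℝ) * ρ - c * s), sq_nonneg ((a : ℝ) - c * s)]
  obtain ⟨c1, c2⟩ : -1.415 ≤ (a : ℝ) - c * s ∧ (a : ℝ) - c * s ≤ 1.415 := by
    refine abs_le.1 (abs_le_of_sq_le_sq ?_ (by norm_num))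
    linarith [sq_nonneg ((b : ℝ) * ρ - c * s), sq_nonneg ((a : ℝ) - b * ρ)]
  have ha : (-1 : ℝ) < a ∧ (a : ℝ) < 3 := by constructor <;> linarith
  have hb : (-2 : ℝ) < b ∧ (b : ℝ) < 4 := by constructor <;> by_contra! h <;> nlinarith
  have hc : (-2 : ℝ) < c ∧ (c : ℝ) < 3 := by constructor <;> by_contra! h <;> nlinarith
  norm_cast at ha hb hc
  lia

theorem eq_one_of_one_le_toReal {x : ZCbrtTwo} (hn : norm x = 1) (h1 : 1 ≤ toReal x)
    (h2 : toReal x < 1 + ρ + ρ ^ 2) : x = 1 := by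
  obtain ⟨⟨ha, ha'⟩, ⟨hb, hb'⟩, hc, hc'⟩ := coeff_mem_Icc_of_one_le_toReal hn h1 h2
  have hρ := lt_ρ
  have hρ2 : 1.5 < ρ ^ 2 := by nlinarith
  rw [toReal_apply] at h1 h2
  obtain ⟨a, b, c⟩ := x
  simp only at *
  interval_cases a <;> interval_cases b <;> interval_cases c <;> norm_num [norm] at hn <;>
    first
    | rfl
    | (push_cast at *; linarith)

theorem norm_unit (u : ZCbrtTwoˣ) : norm (u : ZCbrtTwo) = 1 ∨ norm (u : ZCbrtTwo) = -1 :=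
  Int.isUnit_iff.1 <| .of_mul_eq_one (norm (↑u⁻¹ : ZCbrtTwo)) <| by
    rw [← norm_mul, Units.mul_inv, norm_one]

theorem toReal_zpow (u : ZCbrtTwoˣ) (n : ℤ) :
    toReal (↑(u ^ n) : ZCbrtTwo) = toReal (u : ZCbrtTwo) ^ n :=
  (congrArg Units.val (map_zpow (Units.map (toReal : ZCbrtTwo →* ℝ)) u n)).trans
    (Units.val_zpow_eq_zpow_val _ n)

theorem exists_eq_εUnit_zpow {u : ZCbrtTwoˣ} (hu : 0 < toReal u) : ∃ n : ℤ, u = εUnit ^ n := by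
  set η := toReal (↑εUnit⁻¹ : ZCbrtTwo)
  have hηρ : η = 1 + ρ + ρ ^ 2 := by
    have : toReal ⟨1, 1, 1⟩ = 1 + ρ + ρ ^ 2 := by simp [toReal_apply]
    exact this
  have hη1 : 1 < η := by nlinarith [ρ_pos]
  obtain ⟨n, h1, h2⟩ := exists_mem_Ico_zpow hu hη1
  have hηn : 0 < η ^ n := zpow_pos (by linarith) n
  have hv : toReal (↑(u * εUnit⁻¹ ^ (-n)) : ZCbrtTwo) = toReal u / η ^ n := by
    rw [Units.val_mul, map_mul, toReal_zpow, zpow_neg, div_eq_mul_inv]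
  have hpos : 0 < norm (↑(u * εUnit⁻¹ ^ (-n)) : ZCbrtTwo) :=
    norm_pos_of_toReal_pos (by rw [hv]; positivity)
  have hone : (↑(u * εUnit⁻¹ ^ (-n)) : ZCbrtTwo) = 1 := by
    refine eq_one_of_one_le_toReal ((norm_unit _).resolve_right (by lia)) ?_ ?_
    · rwa [hv, one_le_div hηn]
    · rwa [hv, ← hηρ, div_lt_iff₀ hηn, ← zpow_one_add₀ (by linarith), add_comm]
  refine ⟨-n, ?_⟩
  rw [eq_inv_of_mul_eq_one_left (Units.ext hone)]
  simp

theorem exists_eq_mul_sq_of_toReal_pos {u : ZCbrtTwoˣ} (hu : 0 < toReal u) :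
    ∃ s w : ZCbrtTwo, IsUnit w ∧ (u : ZCbrtTwo) = s * w ^ 2 ∧ (s = 1 ∨ s = ε) := by
  obtain ⟨n, rfl⟩ := exists_eq_εUnit_zpow hu
  rcases Int.even_or_odd' n with ⟨k, rfl | rfl⟩
  · refine ⟨1, ↑(εUnit ^ k), Units.isUnit _, ?_, .inl rfl⟩
    rw [one_mul, mul_comm, zpow_mul, zpow_ofNat, Units.val_pow_eq_pow_val]
  · refine ⟨ε, ↑(εUnit ^ k), Units.isUnit _, ?_, .inr rfl⟩
    rw [add_comm, zpow_one_add, mul_comm 2 k, zpow_mul, zpow_ofNat, Units.val_mul,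
      Units.val_pow_eq_pow_val]
    rfl

theorem exists_eq_mul_sq_of_isUnit {x : ZCbrtTwo} (hx : IsUnit x) :
    ∃ s w : ZCbrtTwo, IsUnit w ∧ x = s * w ^ 2 ∧ (s = 1 ∨ s = -1 ∨ s = ε ∨ s = -ε) := by
  obtain ⟨u, rfl⟩ := hx
  rcases (toReal_ne_zero u.ne_zero).lt_or_gt with h | h
  · obtain ⟨s, w, hw, hu, hs⟩ := exists_eq_mul_sq_of_toReal_pos (u := -u) (by simpa using h)
    refine ⟨-s, w, hw, by rw [neg_mul, ← hu, Units.val_neg, neg_neg], ?_⟩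
    rcases hs with rfl | rfl <;> simp
  · obtain ⟨s, w, hw, hu, hs⟩ := exists_eq_mul_sq_of_toReal_pos h
    exact ⟨s, w, hw, hu, by tauto⟩

end Units

section Primes

/-- The cube root of two, the prime over `2`. -/
def θ : ZCbrtTwo := ⟨0, 1, 0⟩

/-- The prime over `3`. -/
def π₃ : ZCbrtTwo := ⟨1, 1, 0⟩

/-- The prime of norm `5`. -/
def π₅ : ZCbrtTwo := ⟨-3, 0, 2⟩

/-- The prime over `5` of norm `25`, up to sign. -/
def π₂₅ : ZCbrtTwo := ⟨1, 2, -1⟩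

/-- The prime over `17` of norm `289`, up to sign. -/
def π₂₈₉ : ZCbrtTwo := ⟨-1, 2, -4⟩

theorem θ_dvd_iff (x : ZCbrtTwo) : θ ∣ x ↔ 2 ∣ x.a := by
  constructor
  · rintro ⟨y, rfl⟩
    simp [θ]
  · rintro ⟨k, hk⟩
    exact ⟨⟨x.b, x.c, k⟩, by ext <;> simp [θ, hk]⟩

theorem π₃_dvd_iff (x : ZCbrtTwo) : π₃ ∣ x ↔ 3 ∣ x.a - x.b + x.c := by
  constructor
  · rintro ⟨y, rfl⟩
    exact ⟨y.c, by simp only [π₃, mul_a, mul_b, mul_c]; ring⟩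
  · rintro ⟨k, hk⟩
    exact ⟨⟨x.a - 2 * k, x.c - k, k⟩, by ext <;> simp [π₃] <;> linarith⟩

theorem isUnit_of_natAbs_norm_eq_one {x : ZCbrtTwo} (h : (norm x).natAbs = 1) : IsUnit x := by
  have hx := mul_cofactor x
  rcases Int.natAbs_eq (norm x) with hn | hn <;> rw [hn, h] at hx
  · exact IsUnit.of_mul_eq_one _ (hx.trans (by ext <;> simp))
  · exact IsUnit.of_mul_eq_one (-cofactor x) (by rw [mul_neg, hx]; ext <;> simp)

theorem prime_of_prime_natAbs_norm {x : ZCbrtTwo} (h : (norm x).natAbs.Prime) : Prime x := by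
  refine Irreducible.prime ⟨?_, ?_⟩
  · rintro ⟨u, rfl⟩
    rcases norm_unit u with hu | hu <;> simp [hu, Nat.not_prime_one] at h
  · rintro y z rfl
    rw [norm_mul, Int.natAbs_mul] at h
    rcases Nat.prime_mul_iff.1 h with ⟨-, hz⟩ | ⟨-, hy⟩
    · exact Or.inr (isUnit_of_natAbs_norm_eq_one hz)
    · exact Or.inl (isUnit_of_natAbs_norm_eq_one hy)

theorem prime_θ : Prime θ := prime_of_prime_natAbs_norm (by norm_num [norm, θ])

theorem prime_π₃ : Prime π₃ := prime_of_prime_natAbs_norm (by norm_num [norm, π₃])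

theorem prime_π₅ : Prime π₅ := prime_of_prime_natAbs_norm (by norm_num [norm, π₅])

theorem prime_of_forall_map_eq_zero_iff_dvd {R S : Type*} [CommRing R] [CommRing S] [IsDomain S]
    (f : R →+* S) {p : R} (hp : p ≠ 0) (h : ∀ x, f x = 0 ↔ p ∣ x) : Prime p := by
  refine ⟨hp, fun hu => ?_, fun x y hxy => ?_⟩
  · simpa using (h 1).2 hu.dvd
  · rwa [← h, map_mul, mul_eq_zero, h, h] at hxy

open QuadraticAlgebra

instance : Fact (∀ r : ZMod 5, r ^ 2 ≠ 1 + 2 * r) := ⟨by decide⟩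

instance : Fact (∀ r : ZMod 17, r ^ 2 ≠ -13 + -8 * r) := ⟨by decide⟩

instance : Fact (Nat.Prime 5) := ⟨by norm_num⟩

instance : Fact (Nat.Prime 17) := ⟨by norm_num⟩

/-- Reduction modulo `π₂₅`, with values in `𝔽₂₅ = 𝔽₅[ω] / (ω² - 2 ω - 1)`. -/
def residue₂₅ : ZCbrtTwo →+* QuadraticAlgebra (ZMod 5) 1 2 :=
  evalHom (Int.castRingHom _) ω (by decide)

/-- Reduction modulo `π₂₈₉`, with values in `𝔽₂₈₉ = 𝔽₁₇[ω] / (ω² + 8 ω + 13)`. -/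
def residue₂₈₉ : ZCbrtTwo →+* QuadraticAlgebra (ZMod 17) (-13) (-8) :=
  evalHom (Int.castRingHom _) ω (by decide)

theorem residue₂₅_apply (x : ZCbrtTwo) :
    residue₂₅ x = ⟨(x.a + x.c : ℤ), (x.b + 2 * x.c : ℤ)⟩ := by
  ext <;> simp [residue₂₅, evalHom, pow_two, mul_comm]

theorem residue₂₈₉_apply (x : ZCbrtTwo) :
    residue₂₈₉ x = ⟨(x.a - 13 * x.c : ℤ), (x.b - 8 * x.c : ℤ)⟩ := by
  ext <;> simp [residue₂₈₉, evalHom, pow_two, mul_comm, sub_eq_add_neg]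

theorem π₂₅_dvd_iff (x : ZCbrtTwo) : π₂₅ ∣ x ↔ 5 ∣ x.a + x.c ∧ 5 ∣ x.b + 2 * x.c := by
  constructor
  · rintro ⟨y, rfl⟩
    constructor <;> simp [π₂₅] <;> ring_nf <;> omega
  · rintro ⟨⟨k, hk⟩, ⟨l, hl⟩⟩
    refine ⟨⟨-x.c, 0, 0⟩ + ⟨k, l, 0⟩ * ⟨1, 0, 1⟩, ?_⟩
    ext <;> simp [π₂₅] <;> linarith

theorem π₂₈₉_dvd_iff (x : ZCbrtTwo) :
    π₂₈₉ ∣ x ↔ 17 ∣ x.a - 13 * x.c ∧ 17 ∣ x.b - 8 * x.c := by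
  constructor
  · rintro ⟨y, rfl⟩
    constructor <;> simp [π₂₈₉] <;> ring_nf <;> omega
  · rintro ⟨⟨k, hk⟩, ⟨l, hl⟩⟩
    refine ⟨⟨x.c, 0, 0⟩ * ⟨-1, -2, -1⟩ + ⟨k, l, 0⟩ * ⟨-1, -2, 0⟩, ?_⟩
    ext <;> simp [π₂₈₉] <;> linarith

theorem residue₂₅_eq_zero_iff (x : ZCbrtTwo) : residue₂₅ x = 0 ↔ π₂₅ ∣ x := by
  rw [residue₂₅_apply, π₂₅_dvd_iff, QuadraticAlgebra.ext_iff]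
  exact and_congr (ZMod.intCast_zmod_eq_zero_iff_dvd _ 5) (ZMod.intCast_zmod_eq_zero_iff_dvd _ 5)

theorem residue₂₈₉_eq_zero_iff (x : ZCbrtTwo) : residue₂₈₉ x = 0 ↔ π₂₈₉ ∣ x := by
  rw [residue₂₈₉_apply, π₂₈₉_dvd_iff, QuadraticAlgebra.ext_iff]
  exact and_congr (ZMod.intCast_zmod_eq_zero_iff_dvd _ 17) (ZMod.intCast_zmod_eq_zero_iff_dvd _ 17)

theorem prime_π₂₅ : Prime π₂₅ :=
  prime_of_forall_map_eq_zero_iff_dvd residue₂₅ (by decide) residue₂₅_eq_zero_iff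

theorem prime_π₂₈₉ : Prime π₂₈₉ :=
  prime_of_forall_map_eq_zero_iff_dvd residue₂₈₉ (by decide) residue₂₈₉_eq_zero_iff

theorem π₂₈₉_dvd_of_dvd_sq_sub {c x y : ZCbrtTwo}
    (hc : ¬ IsSquare (QuadraticAlgebra.norm (residue₂₈₉ c)))
    (h : π₂₈₉ ∣ y ^ 2 - c * x ^ 2) : π₂₈₉ ∣ x := by
  rw [← residue₂₈₉_eq_zero_iff, map_sub, map_mul, map_pow, map_pow, sub_eq_zero] at h
  rw [← residue₂₈₉_eq_zero_iff, ← QuadraticAlgebra.norm_eq_zero_iff_eq_zero]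
  by_contra hx
  refine hc ⟨(residue₂₈₉ y).norm / (residue₂₈₉ x).norm, ?_⟩
  have hn := congrArg QuadraticAlgebra.norm h
  simp only [map_mul, map_pow] at hn
  field_simp
  exact hn.symm

end Primes

end CbrtTwo

section TwoIsogenyDescentParameter

variable {R : Type*} [CommRing R] [IsDomain R]

theorem sq_ne_prime_pow_mul [IsIntegrallyClosed R] {p x y : R} (hp : Prime p) (k : ℕ)
    (hx : ¬ p ∣ x) : y ^ 2 ≠ p ^ (2 * k) * (p * x) := by
  intro h
  obtain ⟨n, hn⟩ := exists_eq_sq_of_sq_mul_eq_sq (c := p ^ k) (pow_ne_zero k hp.ne_zero)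
    (x := p * x) (by rw [h, ← pow_mul, mul_comm k 2])
  obtain ⟨m, rfl⟩ : p ∣ n := hp.dvd_of_dvd_pow ⟨x, hn.symm⟩
  exact hx ⟨m ^ 2, mul_left_cancel₀ hp.ne_zero (by rw [hn]; ring)⟩

theorem isUnit_or_eq_mul_isUnit_of_squarefree [UniqueFactorizationMonoid R] {q δ : R}
    (hδ : Squarefree δ) (hq : Prime q) (h : ∀ p, Prime p → p ∣ δ → p ∣ q) :
    IsUnit δ ∨ ∃ u, IsUnit u ∧ δ = q * u := by
  by_cases hqδ : q ∣ δ
  · obtain ⟨u, rfl, hqu, hu⟩ := exists_eq_mul_of_squarefree_of_prime_dvd hδ hq hqδ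
    exact Or.inr ⟨u, isUnit_of_forall_prime_not_dvd hu.ne_zero fun p hp hpu =>
      hqu (dvd_of_prime_dvd_prime hp hq (h p hp (hpu.mul_left q)) hpu), rfl⟩
  · exact Or.inl (isUnit_of_forall_prime_not_dvd hδ.ne_zero fun p hp hpδ =>
      hqδ (dvd_of_prime_dvd_prime hp hq (h p hp hpδ) hpδ))

-- Whatever the valuation of `m`, exactly one of the outer terms of the quartic has minimal
-- valuation, and that valuation is odd.
theorem not_dvd_descent_parameter_of_pow_dvd [IsPrincipalIdealRing R] {p A B' O δ m e N : R}
    {l : ℕ} (hp : Prime p) (hδ : Squarefree δ) (hO : ¬ p ∣ O) (hB : δ * B' = p ^ (4 * l + 4) * O)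
    (hA : p ^ (2 * l + 2) ∣ A) (hme : IsCoprime m e) (hm : m ≠ 0)
    (hN : N ^ 2 = δ * m ^ 4 + A * m ^ 2 * e ^ 2 + B' * e ^ 4) : ¬ p ∣ δ := by
  intro hpδ
  obtain ⟨d, rfl, hpd, -⟩ := exists_eq_mul_of_squarefree_of_prime_dvd hδ hp hpδ
  obtain ⟨A, rfl⟩ := hA
  have hdB : d * B' = p ^ (4 * l + 3) * O := mul_left_cancel₀ hp.ne_zero (by
    rw [← mul_assoc, hB]; ring)
  obtain ⟨B, rfl⟩ : p ^ (4 * l + 3) ∣ B' :=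
    (hp.irreducible.coprime_iff_not_dvd.2 hpd).pow_left.dvd_of_dvd_mul_left ⟨O, hdB⟩
  have hpB : ¬ p ∣ B := fun h => hO <| by
    rw [← mul_left_cancel₀ (pow_ne_zero _ hp.ne_zero) ((mul_left_comm _ _ _).trans hdB)]
    exact h.mul_left d
  obtain ⟨i, m, hpm, rfl⟩ := WfDvdMonoid.max_power_factor hm hp.irreducible
  rcases Nat.lt_or_ge l i with hi | hi
  · obtain ⟨i, rfl⟩ := Nat.exists_eq_add_of_lt hi
    have hpe : ¬ p ∣ e := fun h =>
      not_isCoprime_of_prime_dvd hp ((dvd_pow_self p (by omega)).mul_right m) h hme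
    refine sq_ne_prime_pow_mul hp (2 * l + 1) (x := B * e ^ 4 +
      p * (d * p ^ (4 * i + 1) * m ^ 4 + A * p ^ (2 * i) * m ^ 2 * e ^ 2)) ?_ (hN.trans (by ring))
    exact fun h => (hp.dvd_or_dvd ((dvd_add_left (Dvd.intro _ rfl)).1 h)).elim hpB
      fun h => hpe (hp.dvd_of_dvd_pow h)
  · obtain ⟨l, rfl⟩ := Nat.exists_eq_add_of_le hi
    refine sq_ne_prime_pow_mul hp (2 * i) (x := d * m ^ 4 +
      p * (A * p ^ (2 * l) * m ^ 2 * e ^ 2 + p ^ (4 * l + 1) * B * e ^ 4)) ?_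
      (hN.trans (by ring))
    exact fun h => (hp.dvd_or_dvd ((dvd_add_left (Dvd.intro _ rfl)).1 h)).elim hpd
      fun h => hpm (hp.dvd_of_dvd_pow h)

-- Modulo `p` the quartic becomes `N² = A (m e)²`, so `p` divides `m e`, hence also `N`; modulo `p²`
-- only one outer term survives.
theorem not_dvd_descent_parameter_of_nonresidue {p A B' O δ m e N : R} (hp : Prime p)
    (hδ : Squarefree δ) (hO : ¬ p ∣ O) (hB : δ * B' = p ^ 2 * O)
    (hA : ∀ x y, p ∣ y ^ 2 - A * x ^ 2 → p ∣ x) (hme : IsCoprime m e)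
    (hN : N ^ 2 = δ * m ^ 4 + A * m ^ 2 * e ^ 2 + B' * e ^ 4) : ¬ p ∣ δ := by
  intro hpδ
  obtain ⟨d, rfl, hpd, -⟩ := exists_eq_mul_of_squarefree_of_prime_dvd hδ hp hpδ
  have hdB : d * B' = p * O := mul_left_cancel₀ hp.ne_zero (by rw [← mul_assoc, hB]; ring)
  obtain ⟨B, rfl⟩ : p ∣ B' := (hp.dvd_or_dvd ⟨O, hdB⟩).resolve_left hpd
  have hpB : ¬ p ∣ B := fun h => hO <| by
    rw [← mul_left_cancel₀ hp.ne_zero ((mul_left_comm _ _ _).trans hdB)]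
    exact h.mul_left d
  have hpme : p ∣ m * e := hA (m * e) N ⟨d * m ^ 4 + B * e ^ 4, by rw [hN]; ring⟩
  obtain ⟨N, rfl⟩ : p ∣ N := by
    obtain ⟨k, hk⟩ := hpme
    refine hp.dvd_of_dvd_pow (n := 2) ⟨d * m ^ 4 + A * p * k ^ 2 + B * e ^ 4, ?_⟩
    rw [hN]
    linear_combination A * (m * e + p * k) * hk
  have hm_or_he := hp.dvd_or_dvd hpme
  have not_dvd_both : p ∣ m → ¬ p ∣ e := fun hm he => not_isCoprime_of_prime_dvd hp hm he hme
  have hdm : p ∣ d * m ^ 4 + B * e ^ 4 := by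
    obtain ⟨k, hk⟩ := hpme
    refine ⟨N ^ 2 - A * k ^ 2, mul_left_cancel₀ hp.ne_zero ?_⟩
    linear_combination -hN - A * (m * e + p * k) * hk
  rcases hm_or_he with hm | he
  · have h := (dvd_add_right ((hm.pow four_ne_zero).mul_left d)).1 hdm
    exact (hp.dvd_or_dvd h).elim hpB fun h => not_dvd_both hm (hp.dvd_of_dvd_pow h)
  · have h := (dvd_add_left ((he.pow four_ne_zero).mul_left B)).1 hdm
    exact (hp.dvd_or_dvd h).elim hpd fun h => not_dvd_both (hp.dvd_of_dvd_pow h) he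

theorem descent_parameter_pos {K : Type*} [Field K] [LinearOrder K] [IsStrictOrderedRing K]
    {δ A B' m e N : K} (hA : A ≤ 0) (hB : 0 < δ * B') (hm : m ≠ 0)
    (hN : N ^ 2 = δ * m ^ 4 + A * m ^ 2 * e ^ 2 + B' * e ^ 4) : 0 < δ := by
  by_contra! hδ
  have hδ' : δ < 0 := lt_of_le_of_ne hδ (left_ne_zero_of_mul hB.ne')
  have hB' : B' < 0 := (neg_iff_neg_of_mul_pos hB).1 hδ'
  have h₁ : δ * m ^ 4 < 0 := mul_neg_of_neg_of_pos hδ' (by positivity)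
  have h₂ : A * m ^ 2 * e ^ 2 ≤ 0 := by
    rw [mul_assoc]
    exact mul_nonpos_of_nonpos_of_nonneg hA (by positivity)
  have h₃ : B' * e ^ 4 ≤ 0 := mul_nonpos_of_nonpos_of_nonneg hB'.le (by positivity)
  linarith [sq_nonneg N]

end TwoIsogenyDescentParameter

namespace CbrtTwo

section Curve

/-- The linear coefficient of the curve `Y² = X (X² + cA X + cB)`. -/
def cA : ZCbrtTwo := ⟨20, 18, -12⟩

/-- The constant coefficient of the curve `Y² = X (X² + cA X + cB)`. -/
def cB : ZCbrtTwo := ⟨0, 54, 0⟩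

/-- The discriminant `cA² - 4 cB`, the constant coefficient of the `2`-isogenous curve
`Y² = X (X² - 2 cA X + cD)`. -/
def cD : ZCbrtTwo := ⟨-464, 792, -156⟩

/-- The cofactor of `θ⁴` in `cA`. -/
def A₀ : ZCbrtTwo := ⟨9, -6, 5⟩

theorem two_eq : (2 : ZCbrtTwo) = θ ^ 3 := by decide

theorem cA_eq : cA = θ ^ 4 * A₀ := by decide

theorem cB_eq : cB = θ ^ 4 * 27 := by decide

theorem cD_eq : cD = θ ^ 8 * (π₂₈₉ ^ 2 * π₂₅) := by decide

theorem cD_eq_discrim : cD = cA ^ 2 - 4 * cB := by decide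

theorem cB_ne_zero : cB ≠ 0 := by decide

theorem cD_ne_zero : cD ≠ 0 := by decide

end Curve

section ModEight

variable {x m e N : ZCbrtTwo}

/-- Reduction modulo `8 = θ⁹`. -/
def modEight : ZCbrtTwo →+* CbrtTwo (ZMod 8) := map (Int.castRingHom (ZMod 8))

/-- The squares of `ℤ[∛2] / 8`. -/
def squaresModEight : List (CbrtTwo (ZMod 8)) :=
  [⟨0, 0, 0⟩, ⟨0, 0, 1⟩, ⟨0, 0, 4⟩, ⟨0, 2, 0⟩, ⟨0, 2, 4⟩, ⟨0, 6, 5⟩, ⟨1, 0, 0⟩, ⟨1, 0, 4⟩,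
   ⟨1, 2, 1⟩, ⟨1, 2, 2⟩, ⟨1, 2, 5⟩, ⟨1, 2, 6⟩, ⟨1, 4, 0⟩, ⟨1, 4, 4⟩, ⟨1, 6, 1⟩, ⟨1, 6, 2⟩,
   ⟨1, 6, 5⟩, ⟨1, 6, 6⟩, ⟨4, 0, 0⟩, ⟨4, 0, 4⟩, ⟨4, 2, 0⟩, ⟨4, 2, 1⟩, ⟨4, 2, 4⟩, ⟨4, 4, 1⟩,
   ⟨5, 0, 3⟩, ⟨5, 0, 7⟩, ⟨5, 4, 3⟩, ⟨5, 4, 7⟩]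

/-- The squares of `ℤ[∛2] / 8` that are prime to `θ`. -/
def oddSquaresModEight : List (CbrtTwo (ZMod 8)) :=
  squaresModEight.filter fun s => s.a.val % 2 = 1

theorem modEight_sq_mem (x : ZCbrtTwo) : modEight x ^ 2 ∈ squaresModEight := by
  have h : ∀ a b c : ZMod 8, (⟨a, b, c⟩ * ⟨a, b, c⟩ : CbrtTwo (ZMod 8)) ∈ squaresModEight := by
    decide +kernel
  rw [sq]
  exact h _ _ _

theorem modEight_sq_mem_odd (hx : ¬ θ ∣ x) : modEight x ^ 2 ∈ oddSquaresModEight := by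
  have h : ∀ a b c : ZMod 8, a.val % 2 = 1 →
      (⟨a, b, c⟩ * ⟨a, b, c⟩ : CbrtTwo (ZMod 8)) ∈ oddSquaresModEight := by
    decide +kernel
  rw [sq]
  refine h _ _ _ ?_
  rw [θ_dvd_iff] at hx
  have hval := ZMod.val_intCast (n := 8) x.a
  change ((x.a : ℤ) : ZMod 8).val % 2 = 1
  omega

/-- The quartic `c₁ m⁴ + c₂ m² e² + c₃ e⁴` is not a square modulo `8` for `m²` in `S` and `e²`
in `T`. -/
abbrev QuarticObstructed (S T : List (CbrtTwo (ZMod 8))) (c₁ c₂ c₃ : ZCbrtTwo) : Prop :=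
  ∀ s ∈ S, ∀ t ∈ T,
    modEight c₁ * (s * s) + modEight c₂ * (s * t) + modEight c₃ * (t * t) ∉ squaresModEight

theorem QuarticObstructed.false {S T : List (CbrtTwo (ZMod 8))} {c₁ c₂ c₃ : ZCbrtTwo}
    (h : QuarticObstructed S T c₁ c₂ c₃) (hm : modEight m ^ 2 ∈ S) (he : modEight e ^ 2 ∈ T)
    (hN : N ^ 2 = c₁ * m ^ 4 + c₂ * m ^ 2 * e ^ 2 + c₃ * e ^ 4) : False := by
  refine h _ hm _ he ?_
  convert modEight_sq_mem N using 1
  rw [← map_pow modEight N, hN]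
  simp only [map_add, _root_.map_mul, map_pow]
  ring

end ModEight

section Parity

variable {x y : ZCbrtTwo}

theorem not_θ_dvd_mul (hx : ¬ θ ∣ x) (hy : ¬ θ ∣ y) : ¬ θ ∣ x * y :=
  prime_θ.not_dvd_mul hx hy

theorem not_θ_dvd_pow (hx : ¬ θ ∣ x) (n : ℕ) : ¬ θ ∣ x ^ n :=
  fun h => hx (prime_θ.dvd_of_dvd_pow h)

theorem not_θ_dvd_add (hx : ¬ θ ∣ x) (hy : θ ∣ y) : ¬ θ ∣ x + y :=
  fun h => hx ((dvd_add_left hy).1 h)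

theorem θ_dvd_sub (hx : ¬ θ ∣ x) (hy : ¬ θ ∣ y) : θ ∣ x - y := by
  rw [θ_dvd_iff] at *
  rw [sub_a]
  lia

theorem not_θ_dvd_twenty_seven : ¬ θ ∣ (27 : ZCbrtTwo) := by
  rw [θ_dvd_iff]
  decide

end Parity

section FirstDescent

variable {d m e N : ZCbrtTwo}

/-- The classes modulo squares which the descent parameter on `Y² = X (X² + cA X + cB)` may take
once `θ` is excluded. -/
def firstDescentClasses : List ZCbrtTwo := [1, -1, ε, -ε, π₃, -π₃, ε * π₃, -(ε * π₃)]

theorem not_θ_dvd_of_mem_firstDescentClasses (hd : d ∈ firstDescentClasses) : ¬ θ ∣ d := by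
  have h : ∀ d ∈ firstDescentClasses, ¬ 2 ∣ d.a := by decide
  exact (θ_dvd_iff d).not.2 (h d hd)

theorem exists_firstDescentClass {δ B' : ZCbrtTwo} (hδ : Squarefree δ) (hθ : ¬ θ ∣ δ)
    (hB : δ * B' = cB) : ∃ d ∈ firstDescentClasses, ∃ w, IsUnit w ∧ δ = d * w ^ 2 := by
  have hπ₃ : ∀ p, Prime p → p ∣ δ → p ∣ π₃ := by
    intro p hp hpδ
    have hcB : cB = θ ^ 4 * (ε * π₃ ^ 3) ^ 3 := by decide
    have hpB : p ∣ θ ^ 4 * (ε * π₃ ^ 3) ^ 3 := hcB ▸ hB ▸ hpδ.mul_right B'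
    rcases hp.dvd_or_dvd hpB with h | h
    · exact absurd (dvd_of_prime_dvd_prime hp prime_θ (hp.dvd_of_dvd_pow h) hpδ) hθ
    · rcases hp.dvd_or_dvd (hp.dvd_of_dvd_pow h) with h | h
      · exact absurd (isUnit_of_dvd_unit h εUnit.isUnit) hp.not_isUnit
      · exact hp.dvd_of_dvd_pow h
  rcases isUnit_or_eq_mul_isUnit_of_squarefree hδ prime_π₃ hπ₃ with hu | ⟨u, hu, rfl⟩
  · obtain ⟨s, w, hw, rfl, hs⟩ := exists_eq_mul_sq_of_isUnit hu
    refine ⟨s, ?_, w, hw, rfl⟩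
    rcases hs with rfl | rfl | rfl | rfl <;> decide
  · obtain ⟨s, w, hw, rfl, hs⟩ := exists_eq_mul_sq_of_isUnit hu
    refine ⟨π₃ * s, ?_, w, hw, by ring⟩
    rcases hs with rfl | rfl | rfl | rfl <;> decide

theorem first_descent {a b z : ZCbrtTwo} (ha : a ≠ 0) (hb : b ≠ 0)
    (h : a * b * (a ^ 2 + cA * a * b + cB * b ^ 2) = z ^ 2) :
    ∃ d ∈ firstDescentClasses, ∃ m e N, IsCoprime m e ∧ m ≠ 0 ∧ e ≠ 0 ∧
      a * e ^ 2 = d * m ^ 2 * b ∧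
      d * N ^ 2 = d ^ 2 * m ^ 4 + cA * d * m ^ 2 * e ^ 2 + cB * e ^ 4 := by
  obtain ⟨δ, B', m, e, N, hδ, hB, hme, hm, he, hae, hN⟩ := exists_two_isogeny_descent ha hb h
  have hθ : ¬ θ ∣ δ := not_dvd_descent_parameter_of_pow_dvd (l := 0) prime_θ hδ
    not_θ_dvd_twenty_seven (hB.trans cB_eq) ((pow_dvd_pow θ (by norm_num)).trans ⟨A₀, cA_eq⟩)
    hme hm hN
  obtain ⟨d, hd, w, hw, rfl⟩ := exists_firstDescentClass hδ hθ hB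
  refine ⟨d, hd, w * m, e, w * N, ?_, mul_ne_zero hw.ne_zero hm, he, ?_, ?_⟩
  · exact (isCoprime_mul_unit_left_left hw m e).2 hme
  · rw [hae]; ring
  · linear_combination d * w ^ 2 * hN + e ^ 4 * hB

theorem θ_sq_dvd_of_first_descent (hd : d ∈ firstDescentClasses) (hme : IsCoprime m e)
    (hm : θ ∣ m) (hN : d * N ^ 2 = d ^ 2 * m ^ 4 + cA * d * m ^ 2 * e ^ 2 + cB * e ^ 4) :
    θ ^ 2 ∣ m := by
  have obstruction : ∀ d ∈ firstDescentClasses, QuarticObstructed oddSquaresModEight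
      oddSquaresModEight (d ^ 3) (d ^ 2 * θ ^ 2 * A₀) (d * 27) := by decide +kernel
  have he : ¬ θ ∣ e := fun h => not_isCoprime_of_prime_dvd prime_θ hm h hme
  obtain ⟨m, rfl⟩ := hm
  by_contra hθm
  have hm : ¬ θ ∣ m := fun h => hθm (by rw [sq]; exact mul_dvd_mul_left θ h)
  obtain ⟨n, hn⟩ := exists_eq_sq_of_sq_mul_eq_sq (c := θ ^ 2) (pow_ne_zero 2 prime_θ.ne_zero)
    (x := d ^ 3 * m ^ 4 + d ^ 2 * θ ^ 2 * A₀ * m ^ 2 * e ^ 2 + d * 27 * e ^ 4) (y := d * N) (by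
      rw [cA_eq, cB_eq] at hN
      linear_combination -d * hN)
  exact (obstruction d hd).false (modEight_sq_mem_odd hm) (modEight_sq_mem_odd he) hn.symm

theorem firstDescentClass_of_not_θ_dvd (hd : d ∈ firstDescentClasses) (hm : ¬ θ ∣ m)
    (hN : d * N ^ 2 = d ^ 2 * m ^ 4 + cA * d * m ^ 2 * e ^ 2 + cB * e ^ 4) :
    d = 1 ∨ d = -(ε * π₃) ∧ ¬ θ ^ 2 ∣ e := by
  have obstruction : ∀ d ∈ firstDescentClasses, d = 1 ∨ d = -(ε * π₃) ∨
      QuarticObstructed oddSquaresModEight squaresModEight (d ^ 3) (d ^ 2 * cA) (d * cB) := by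
    decide +kernel
  rcases obstruction d hd with rfl | rfl | h
  · exact Or.inl rfl
  · refine Or.inr ⟨rfl, ?_⟩
    rintro ⟨f, rfl⟩
    have obstruction' : QuarticObstructed oddSquaresModEight squaresModEight (-(ε * π₃) ^ 3)
        ((ε * π₃) ^ 2 * cA * θ ^ 4) (-(ε * π₃) * cB * θ ^ 8) := by decide +kernel
    exact (obstruction'.false (modEight_sq_mem_odd hm) (modEight_sq_mem f)
      (N := ε * π₃ * N) (by linear_combination -(ε * π₃) * hN)).elim
  · exact (h.false (modEight_sq_mem_odd hm) (modEight_sq_mem e)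
      (N := d * N) (by linear_combination d * hN)).elim

end FirstDescent

section SecondDescent

variable {d m e f N M : ZCbrtTwo}

theorem toReal_ε_pos : 0 < toReal ε := toReal_pos_of_norm_pos (by decide)

theorem toReal_π₂₅_pos : 0 < toReal π₂₅ := toReal_pos_of_norm_pos (by decide)

theorem toReal_cA_pos : 0 < toReal cA := toReal_pos_of_norm_pos (by decide)

theorem toReal_cD_pos : 0 < toReal cD := toReal_pos_of_norm_pos (by decide)

/-- The classes of the descent parameter on the isogenous curve `Y² = X (X² - 2 cA X + cD)` which
are ruled out modulo `8`. -/
def obstructedClasses : List ZCbrtTwo := [ε, ε * π₂₅]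

theorem not_second_descent_of_not_dvd (hd : d ∈ obstructedClasses) (hm : ¬ θ ∣ m) :
    d * N ^ 2 ≠ d ^ 2 * m ^ 4 - 2 * cA * d * m ^ 2 * e ^ 2 + cD * e ^ 4 := by
  have obstruction : ∀ d ∈ obstructedClasses, QuarticObstructed oddSquaresModEight squaresModEight
      (d ^ 3) (-2 * cA * d ^ 2) (d * cD) := by decide +kernel
  exact fun hN => (obstruction d hd).false (modEight_sq_mem_odd hm) (modEight_sq_mem e)
    (N := d * N) (by linear_combination d * hN)

theorem not_second_descent_of_θ_mul (hd : d ∈ obstructedClasses) (hm : ¬ θ ∣ m) (he : ¬ θ ∣ e) :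
    d * N ^ 2 ≠ d ^ 2 * (θ * m) ^ 4 - 2 * cA * d * (θ * m) ^ 2 * e ^ 2 + cD * e ^ 4 := by
  have obstruction : ∀ d ∈ obstructedClasses, QuarticObstructed oddSquaresModEight
      oddSquaresModEight (d ^ 3) (-θ ^ 5 * A₀ * d ^ 2) (d * (θ ^ 4 * (π₂₈₉ ^ 2 * π₂₅))) := by
    decide +kernel
  intro hN
  obtain ⟨n, hn⟩ := exists_eq_sq_of_sq_mul_eq_sq (c := θ ^ 2) (pow_ne_zero 2 prime_θ.ne_zero)
    (x := d ^ 3 * m ^ 4 + -θ ^ 5 * A₀ * d ^ 2 * m ^ 2 * e ^ 2 +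
      d * (θ ^ 4 * (π₂₈₉ ^ 2 * π₂₅)) * e ^ 4) (y := d * N) (by
      rw [cA_eq, cD_eq, two_eq] at hN
      linear_combination -d * hN)
  exact (obstruction d hd).false (modEight_sq_mem_odd hm) (modEight_sq_mem_odd he) hn.symm

theorem θ_mul_modEight (x : CbrtTwo (ZMod 8)) : modEight θ * x = ⟨2 * x.c, x.a, x.b⟩ := by
  have h : modEight θ = ⟨0, 1, 0⟩ := by decide
  rw [h]
  ext <;> simp

-- Completing the square turns the quartic into `d n² = (d m² - A₀ e²)² - 27 θ² e⁴`, where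
-- `v = d m² - A₀ e²` is divisible by `θ`; modulo `8` the quotient `v / θ` is determined by `v` up
-- to its last coefficient.
theorem not_second_descent_of_θ_sq_mul (hd : d ∈ obstructedClasses) (hm : ¬ θ ∣ m)
    (he : ¬ θ ∣ e) :
    d * N ^ 2 ≠ d ^ 2 * (θ ^ 2 * m) ^ 4 - 2 * cA * d * (θ ^ 2 * m) ^ 2 * e ^ 2 + cD * e ^ 4 := by
  have obstruction : ∀ d ∈ obstructedClasses, ∀ s ∈ oddSquaresModEight, ∀ t ∈ oddSquaresModEight,
      let v := modEight d * s - modEight A₀ * t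
      ∀ c, 2 * c = v.a → modEight d * ((⟨v.b, v.c, c⟩ : CbrtTwo (ZMod 8)) ^ 2 - 27 * (t * t)) ∉
        squaresModEight := by
    decide +kernel
  intro hN
  have hv : θ ∣ d * m ^ 2 - A₀ * e ^ 2 := by
    have hd' : ¬ θ ∣ d := by
      have h : ∀ d ∈ obstructedClasses, ¬ 2 ∣ d.a := by decide
      exact (θ_dvd_iff d).not.2 (h d hd)
    have hA₀ : ¬ θ ∣ A₀ := (θ_dvd_iff A₀).not.2 (by decide)
    exact θ_dvd_sub (not_θ_dvd_mul hd' (not_θ_dvd_pow hm 2))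
      (not_θ_dvd_mul hA₀ (not_θ_dvd_pow he 2))
  obtain ⟨u, hu⟩ := hv
  obtain ⟨n, hn⟩ := exists_eq_sq_of_sq_mul_eq_sq (c := θ ^ 5) (pow_ne_zero 5 prime_θ.ne_zero)
    (x := d * (u ^ 2 - 27 * e ^ 4)) (y := d * N) (by
      have h4 : (4 : ZCbrtTwo) = θ ^ 6 := by decide
      rw [cD_eq_discrim, cB_eq, cA_eq, two_eq, h4] at hN
      linear_combination -d * hN - d * θ ^ 8 * (d * m ^ 2 - A₀ * e ^ 2 + θ * u) * hu -
        θ ^ 8 * d ^ 2 * e ^ 2 * m ^ 2 * A₀ * two_eq)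
  have hθu : modEight d * modEight m ^ 2 - modEight A₀ * modEight e ^ 2 =
      ⟨2 * (modEight u).c, (modEight u).a, (modEight u).b⟩ := by
    rw [← θ_mul_modEight]
    simpa only [map_sub, _root_.map_mul, map_pow] using congr_arg modEight hu
  refine obstruction d hd _ (modEight_sq_mem_odd hm) _ (modEight_sq_mem_odd he)
    (modEight u).c ?_ ?_
  · rw [hθu]
  · rw [hθu]
    convert modEight_sq_mem n using 1
    rw [← map_pow modEight n, ← hn]
    simp only [map_sub, _root_.map_mul, map_pow, map_ofNat]
    ring

theorem not_second_descent_of_θ_cube_mul (hd : d ∈ obstructedClasses) (he : ¬ θ ∣ e) :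
    d * N ^ 2 ≠ d ^ 2 * (θ ^ 3 * m) ^ 4 - 2 * cA * d * (θ ^ 3 * m) ^ 2 * e ^ 2 + cD * e ^ 4 := by
  have obstruction : ∀ d ∈ obstructedClasses, QuarticObstructed squaresModEight
      oddSquaresModEight (d ^ 3 * θ ^ 4) (-θ ^ 5 * A₀ * d ^ 2) (d * (π₂₈₉ ^ 2 * π₂₅)) := by
    decide +kernel
  intro hN
  obtain ⟨n, hn⟩ := exists_eq_sq_of_sq_mul_eq_sq (c := θ ^ 4) (pow_ne_zero 4 prime_θ.ne_zero)
    (x := d ^ 3 * θ ^ 4 * m ^ 4 + -θ ^ 5 * A₀ * d ^ 2 * m ^ 2 * e ^ 2 +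
      d * (π₂₈₉ ^ 2 * π₂₅) * e ^ 4) (y := d * N) (by
      rw [cA_eq, cD_eq, two_eq] at hN
      linear_combination -d * hN)
  exact (obstruction d hd).false (modEight_sq_mem m) (modEight_sq_mem_odd he) hn.symm

theorem not_second_descent (hd : d ∈ obstructedClasses) (hme : IsCoprime m e) :
    d * N ^ 2 ≠ d ^ 2 * m ^ 4 - 2 * cA * d * m ^ 2 * e ^ 2 + cD * e ^ 4 := by
  by_cases h₁ : θ ∣ m
  · have he : ¬ θ ∣ e := fun h => not_isCoprime_of_prime_dvd prime_θ h₁ h hme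
    obtain ⟨m₁, rfl⟩ := h₁
    by_cases h₂ : θ ∣ m₁
    · obtain ⟨m₂, rfl⟩ := h₂
      by_cases h₃ : θ ∣ m₂
      · obtain ⟨m₃, rfl⟩ := h₃
        rw [show θ * (θ * (θ * m₃)) = θ ^ 3 * m₃ by ring]
        exact not_second_descent_of_θ_cube_mul hd he
      · rw [← mul_assoc, ← sq]
        exact not_second_descent_of_θ_sq_mul hd h₃ he
    · exact not_second_descent_of_θ_mul hd h₂ he
  · exact not_second_descent_of_not_dvd hd h₁

theorem not_π₂₈₉_dvd_second_descent_parameter {δ B' : ZCbrtTwo} (hδ : Squarefree δ)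
    (hB : δ * B' = cD) (hme : IsCoprime m e)
    (hN : N ^ 2 = δ * m ^ 4 + -2 * cA * m ^ 2 * e ^ 2 + B' * e ^ 4) : ¬ π₂₈₉ ∣ δ := by
  have hcD : cD = π₂₈₉ ^ 2 * (θ ^ 8 * π₂₅) := by decide
  refine not_dvd_descent_parameter_of_nonresidue prime_π₂₈₉ hδ ?_ (hB.trans hcD)
    (fun x y h => π₂₈₉_dvd_of_dvd_sq_sub ?_ h) hme hN
  · rw [π₂₈₉_dvd_iff]
    decide
  · decide

theorem not_θ_dvd_second_descent_parameter {δ B' : ZCbrtTwo} (hδ : Squarefree δ)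
    (hB : δ * B' = cD) (hme : IsCoprime m e) (hm : m ≠ 0)
    (hN : N ^ 2 = δ * m ^ 4 + -2 * cA * m ^ 2 * e ^ 2 + B' * e ^ 4) : ¬ θ ∣ δ := by
  refine not_dvd_descent_parameter_of_pow_dvd (l := 1) prime_θ hδ ?_ (hB.trans cD_eq)
    ⟨-θ ^ 3 * A₀, by decide⟩ hme hm hN
  rw [θ_dvd_iff]
  decide

theorem toReal_second_descent_parameter_pos {δ B' : ZCbrtTwo} (hB : δ * B' = cD) (hm : m ≠ 0)
    (hN : N ^ 2 = δ * m ^ 4 + -2 * cA * m ^ 2 * e ^ 2 + B' * e ^ 4) : 0 < toReal δ := by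
  refine descent_parameter_pos (A := toReal (-2 * cA)) (B' := toReal B') (m := toReal m)
    (e := toReal e) (N := toReal N) ?_ ?_ (toReal_ne_zero hm) ?_
  · simp only [_root_.map_mul, map_neg, map_ofNat]
    linarith [toReal_cA_pos]
  · rw [← _root_.map_mul, hB]
    exact toReal_cD_pos
  · simpa only [map_add, _root_.map_mul, map_pow] using congr_arg toReal hN

theorem exists_eq_mul_sq_of_squarefree_of_pos {δ : ZCbrtTwo} (hδ : Squarefree δ)
    (hπ₂₅ : ∀ p, Prime p → p ∣ δ → p ∣ π₂₅) (hpos : 0 < toReal δ) :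
    ∃ d w, IsUnit w ∧ δ = d * w ^ 2 ∧ (d = 1 ∨ d = π₂₅ ∨ d ∈ obstructedClasses) := by
  have sign : ∀ {s w : ZCbrtTwo}, 0 < toReal (s * w ^ 2) → 0 < toReal s := fun h => by
    rw [_root_.map_mul, map_pow] at h
    exact pos_of_mul_pos_left h (sq_nonneg _)
  rcases isUnit_or_eq_mul_isUnit_of_squarefree hδ prime_π₂₅ hπ₂₅ with hu | ⟨u, hu, rfl⟩
  · obtain ⟨s, w, hw, rfl, hs⟩ := exists_eq_mul_sq_of_isUnit hu
    have hs' := sign hpos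
    refine ⟨s, w, hw, rfl, ?_⟩
    rcases hs with rfl | rfl | rfl | rfl
    · exact Or.inl rfl
    · exact absurd hs' (by simp)
    · simp [obstructedClasses]
    · exact absurd hs' (by simpa using toReal_ε_pos.le)
  · obtain ⟨s, w, hw, rfl, hs⟩ := exists_eq_mul_sq_of_isUnit hu
    rw [_root_.map_mul, mul_pos_iff_of_pos_left toReal_π₂₅_pos] at hpos
    have hs' := sign hpos
    refine ⟨s * π₂₅, w, hw, by ring, ?_⟩
    rcases hs with rfl | rfl | rfl | rfl
    · exact Or.inr (Or.inl (one_mul _))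
    · exact absurd hs' (by simp)
    · simp [obstructedClasses]
    · exact absurd hs' (by simpa using toReal_ε_pos.le)

theorem second_descent {a b z : ZCbrtTwo} (ha : a ≠ 0) (hb : b ≠ 0)
    (h : a * b * (a ^ 2 + -2 * cA * a * b + cD * b ^ 2) = z ^ 2) :
    ∃ d m e, e ≠ 0 ∧ (d = 1 ∨ d = π₂₅) ∧ a * e ^ 2 = d * m ^ 2 * b := by
  obtain ⟨δ, B', m, e, N, hδ, hB, hme, hm, he, hae, hN⟩ := exists_two_isogeny_descent ha hb h
  have hπ₂₅ : ∀ p, Prime p → p ∣ δ → p ∣ π₂₅ := by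
    intro p hp hpδ
    have hpD : p ∣ θ ^ 8 * (π₂₈₉ ^ 2 * π₂₅) := cD_eq ▸ hB ▸ hpδ.mul_right B'
    rcases hp.dvd_or_dvd hpD with h | h
    · exact absurd (dvd_of_prime_dvd_prime hp prime_θ (hp.dvd_of_dvd_pow h) hpδ)
        (not_θ_dvd_second_descent_parameter hδ hB hme hm hN)
    · rcases hp.dvd_or_dvd h with h | h
      · exact absurd (dvd_of_prime_dvd_prime hp prime_π₂₈₉ (hp.dvd_of_dvd_pow h) hpδ)
          (not_π₂₈₉_dvd_second_descent_parameter hδ hB hme hN)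
      · exact h
  obtain ⟨d, w, hw, rfl, hd⟩ := exists_eq_mul_sq_of_squarefree_of_pos hδ hπ₂₅
    (toReal_second_descent_parameter_pos hB hm hN)
  have hae' : a * e ^ 2 = d * (w * m) ^ 2 * b := by
    rw [hae]
    ring
  rcases hd with hd | hd | hd
  · exact ⟨d, w * m, e, he, Or.inl hd, hae'⟩
  · exact ⟨d, w * m, e, he, Or.inr hd, hae'⟩
  · exact absurd (by linear_combination d * w ^ 2 * hN + e ^ 4 * hB)
      (not_second_descent (N := w * N) hd ((isCoprime_mul_unit_left_left hw m e).2 hme))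

theorem exists_sq_eq_of_quartic (he : e ≠ 0)
    (hN : N ^ 2 = M ^ 4 + cA * M ^ 2 * e ^ 2 + cB * e ^ 4) :
    ∃ ξ N', N' ^ 2 = N ^ 2 ∧ ξ ^ 2 = cA * e ^ 2 + 2 * M ^ 2 + 2 * N' := by
  set F := cA * e ^ 2 + 2 * M ^ 2 + 2 * N
  set F' := cA * e ^ 2 + 2 * M ^ 2 - 2 * N with hF'
  have hFF' : F * F' = cD * e ^ 4 := by
    rw [cD_eq_discrim]
    linear_combination -4 * hN
  have hF0 : F ≠ 0 :=
    left_ne_zero_of_mul (hFF' ▸ mul_ne_zero cD_ne_zero (pow_ne_zero 4 he))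
  obtain ⟨d, k, f, hf, hd, hk⟩ := second_descent (z := 2 * M * e * F) hF0 (pow_ne_zero 2 he) (by
    rw [cD_eq_discrim]
    linear_combination 4 * e ^ 2 * F * hN)
  have hk0 : k ≠ 0 := by
    rintro rfl
    exact mul_ne_zero hF0 (pow_ne_zero 2 hf) (by rw [hk]; ring)
  rcases hd with rfl | rfl
  · obtain ⟨ξ, hξ⟩ := exists_eq_sq_of_sq_mul_eq_sq (x := F) (y := k * e) hf
      (by linear_combination hk)
    exact ⟨ξ, N, rfl, hξ.symm⟩
  · obtain ⟨ξ, hξ⟩ := exists_eq_sq_of_sq_mul_eq_sq (x := F') (y := f * θ ^ 4 * π₂₈₉ * e) hk0 (by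
      refine mul_left_cancel₀ (mul_ne_zero prime_π₂₅.ne_zero (pow_ne_zero 2 he)) ?_
      rw [cD_eq] at hFF'
      linear_combination f ^ 2 * hFF' - F' * hk)
    exact ⟨ξ, -N, by ring, by rw [← hξ, hF']; ring⟩

end SecondDescent

end CbrtTwo

section ChordAndHalving

variable {R : Type*} [CommRing R] [IsDomain R] {A B : R}

-- The sum of the points `(x₁, y₁)` and `(x₂, y₂)` has first coordinate `K / (x₁ - x₂)²`.
theorem exists_sq_eq_quartic_of_chord [IsIntegrallyClosed R] {x₁ y₁ x₂ y₂ c : R}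
    (h₁ : y₁ ^ 2 = x₁ * (x₁ ^ 2 + A * x₁ + B)) (h₂ : y₂ ^ 2 = x₂ * (x₂ ^ 2 + A * x₂ + B))
    (hc : x₁ * x₂ = c ^ 2) (hc0 : c ≠ 0) (hne : x₁ * y₂ ≠ x₂ * y₁) :
    ∃ k n, n ^ 2 = k ^ 4 + A * k ^ 2 * (x₁ - x₂) ^ 2 + B * (x₁ - x₂) ^ 4 := by
  obtain ⟨K, hK⟩ : ∃ K, K = (y₁ - y₂) ^ 2 - (A + x₁ + x₂) * (x₁ - x₂) ^ 2 := ⟨_, rfl⟩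
  have hcK : c ^ 2 * K = (x₁ * y₂ - x₂ * y₁) ^ 2 := by
    rw [← hc, hK]
    linear_combination (x₁ * x₂ - x₂ ^ 2) * h₁ + (x₁ * x₂ - x₁ ^ 2) * h₂
  have hcubic : K * (K ^ 2 + A * K * (x₁ - x₂) ^ 2 + B * (x₁ - x₂) ^ 4) =
      (y₁ * (x₁ - x₂) ^ 3 + (y₁ - y₂) * (K - x₁ * (x₁ - x₂) ^ 2)) ^ 2 := by
    linear_combination -(x₁ - x₂) ^ 3 * (K - x₂ * (x₁ - x₂) ^ 2) * h₁ +
      (x₁ - x₂) ^ 3 * (K - x₁ * (x₁ - x₂) ^ 2) * h₂ +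
      (K - x₁ * (x₁ - x₂) ^ 2) * (K - x₂ * (x₁ - x₂) ^ 2) * hK
  obtain ⟨k, hk⟩ := exists_eq_sq_of_sq_mul_eq_sq hc0 hcK
  have hk0 : k ≠ 0 := by
    rintro rfl
    refine sub_ne_zero.2 hne (pow_eq_zero_iff two_ne_zero |>.1 ?_)
    rw [← hcK, hk]
    ring
  rw [hk] at hcubic
  obtain ⟨n, hn⟩ := exists_eq_sq_of_sq_mul_eq_sq (c := k)
    (x := k ^ 4 + A * k ^ 2 * (x₁ - x₂) ^ 2 + B * (x₁ - x₂) ^ 4) hk0 (Eq.trans (by ring) hcubic)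
  exact ⟨k, n, hn.symm⟩

-- The duplication formula on `Y² = X (X² + A X + B)`, applied to a half with first coordinate
-- `d m² / e₁²` of the point with first coordinate `M² / e²`.
theorem sq_eq_sq_of_half {M N ξ d m e e₁ N₁ : R} (hd : d ≠ 0) (he : e ≠ 0)
    (hN : N ^ 2 = M ^ 4 + A * M ^ 2 * e ^ 2 + B * e ^ 4)
    (hξ : ξ ^ 2 = A * e ^ 2 + 2 * M ^ 2 + 2 * N)
    (ha : (M ^ 2 + N + M * ξ) * e₁ ^ 2 = d * m ^ 2 * e ^ 2)
    (hN₁ : d * N₁ ^ 2 = d ^ 2 * m ^ 4 + A * d * m ^ 2 * e₁ ^ 2 + B * e₁ ^ 4) :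
    (e * (d ^ 2 * m ^ 4 - B * e₁ ^ 4)) ^ 2 = (2 * M * d * m * e₁ * N₁) ^ 2 := by
  have hconj : (M ^ 2 + N - M * ξ) * (d * m ^ 2) = B * e ^ 2 * e₁ ^ 2 := by
    refine mul_left_cancel₀ (pow_ne_zero 2 he) ?_
    linear_combination -(M ^ 2 + N - M * ξ) * ha + e₁ ^ 2 * hN - e₁ ^ 2 * M ^ 2 * hξ
  have hsq : (m * e₁ * ξ) ^ 2 = (e * N₁) ^ 2 := by
    refine mul_left_cancel₀ hd ?_
    linear_combination (d * m ^ 2 * e₁ ^ 2) * hξ + d * m ^ 2 * ha + e₁ ^ 2 * hconj - e ^ 2 * hN₁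
  have hξe : 2 * M * ξ * d * m ^ 2 * e₁ ^ 2 = e ^ 2 * (d ^ 2 * m ^ 4 - B * e₁ ^ 4) := by
    linear_combination d * m ^ 2 * ha - e₁ ^ 2 * hconj
  refine mul_left_cancel₀ (pow_ne_zero 2 he) ?_
  linear_combination -(2 * M * ξ * d * m ^ 2 * e₁ ^ 2 + e ^ 2 * (d ^ 2 * m ^ 4 - B * e₁ ^ 4)) * hξe
    + 4 * M ^ 2 * d ^ 2 * m ^ 2 * e₁ ^ 2 * hsq

end ChordAndHalving

namespace CbrtTwo

section Valuation

variable {x y : ZCbrtTwo}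

/-- The `θ`-adic valuation of a nonzero element (with the junk value `1` at `0`). -/
noncomputable def ord (x : ZCbrtTwo) : ℕ := multiplicity θ x

theorem ord_mul (hx : x ≠ 0) (hy : y ≠ 0) : ord (x * y) = ord x + ord y :=
  multiplicity_mul prime_θ (FiniteMultiplicity.of_prime_left prime_θ (mul_ne_zero hx hy))

theorem ord_pow (hx : x ≠ 0) (n : ℕ) : ord (x ^ n) = n * ord x :=
  (FiniteMultiplicity.of_prime_left prime_θ hx).multiplicity_pow prime_θ

theorem ord_θ_pow (n : ℕ) : ord (θ ^ n) = n :=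
  multiplicity_pow_self_of_prime prime_θ n

theorem ord_eq_zero : ord x = 0 ↔ ¬ θ ∣ x :=
  multiplicity_eq_zero

theorem ord_neg (x : ZCbrtTwo) : ord (-x) = ord x :=
  multiplicity_neg θ x

theorem θ_pow_dvd_iff_le_ord (hx : x ≠ 0) {n : ℕ} : θ ^ n ∣ x ↔ n ≤ ord x :=
  (FiniteMultiplicity.of_prime_left prime_θ hx).pow_dvd_iff_le_multiplicity

theorem ne_zero_of_not_θ_dvd (hx : ¬ θ ∣ x) : x ≠ 0 := by
  rintro rfl
  exact hx (dvd_zero θ)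

end Valuation

section Halving

variable {M N ξ d m e e₁ N₁ : ZCbrtTwo}

theorem ord_eq_ord_half_add_three (hMe : IsCoprime M e) (he : e ≠ 0)
    (hN : N ^ 2 = M ^ 4 + cA * M ^ 2 * e ^ 2 + cB * e ^ 4)
    (hξ : ξ ^ 2 = cA * e ^ 2 + 2 * M ^ 2 + 2 * N) (hd : d ∈ firstDescentClasses)
    (hm : ¬ θ ∣ m) (he₁ : e₁ ≠ 0) (ha : (M ^ 2 + N + M * ξ) * e₁ ^ 2 = d * m ^ 2 * e ^ 2)
    (hN₁ : d * N₁ ^ 2 = d ^ 2 * m ^ 4 + cA * d * m ^ 2 * e₁ ^ 2 + cB * e₁ ^ 4) :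
    ord e = ord e₁ + 3 := by
  have hdθ := not_θ_dvd_of_mem_firstDescentClasses hd
  have hdm := not_θ_dvd_mul (not_θ_dvd_pow hdθ 2) (not_θ_dvd_pow hm 4)
  have hθcA : θ ∣ cA := by rw [θ_dvd_iff]; decide
  have hθcB : θ ∣ cB := by rw [θ_dvd_iff]; decide
  have hN₁θ : ¬ θ ∣ N₁ := by
    intro h
    refine not_θ_dvd_add (not_θ_dvd_add hdm ?_) (hθcB.mul_right (e₁ ^ 4))
      (hN₁ ▸ (dvd_pow h two_ne_zero).mul_left d)
    simpa only [mul_assoc] using hθcA.mul_right _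
  have hO : ¬ θ ∣ d ^ 2 * m ^ 4 - cB * e₁ ^ 4 := by
    rw [sub_eq_add_neg]
    exact not_θ_dvd_add hdm (dvd_neg.2 (hθcB.mul_right (e₁ ^ 4)))
  have key := sq_eq_sq_of_half (ne_zero_of_not_θ_dvd hdθ) he hN hξ ha hN₁
  have hθe : θ ∣ e := by
    have h : θ ∣ (e * (d ^ 2 * m ^ 4 - cB * e₁ ^ 4)) ^ 2 := by
      rw [key, two_eq]
      exact ⟨θ ^ 5 * (M * d * m * e₁ * N₁) ^ 2, by ring⟩
    exact (prime_θ.dvd_or_dvd (prime_θ.dvd_of_dvd_pow h)).resolve_right hO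
  have hM : ¬ θ ∣ M := fun h => not_isCoprime_of_prime_dvd prime_θ h hθe hMe
  have hs : ¬ θ ∣ M * d * m * N₁ :=
    not_θ_dvd_mul (not_θ_dvd_mul (not_θ_dvd_mul hM hdθ) hm) hN₁θ
  have hord := congr_arg ord (show (e * (d ^ 2 * m ^ 4 - cB * e₁ ^ 4)) ^ 2 =
    (θ ^ 3 * (e₁ * (M * d * m * N₁))) ^ 2 by rw [key, two_eq]; ring)
  have hO0 := ne_zero_of_not_θ_dvd hO
  have hs0 := ne_zero_of_not_θ_dvd hs
  have hθ0 : θ ^ 3 ≠ 0 := pow_ne_zero 3 prime_θ.ne_zero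
  rw [ord_pow (mul_ne_zero he hO0), ord_pow (mul_ne_zero hθ0 (mul_ne_zero he₁ hs0)),
    ord_mul he hO0, ord_mul hθ0 (mul_ne_zero he₁ hs0), ord_mul he₁ hs0, ord_θ_pow,
    ord_eq_zero.2 hO, ord_eq_zero.2 hs] at hord
  lia

theorem exists_half_class (he : e ≠ 0) (hN : N ^ 2 = M ^ 4 + cA * M ^ 2 * e ^ 2 + cB * e ^ 4)
    (hξ : ξ ^ 2 = cA * e ^ 2 + 2 * M ^ 2 + 2 * N) :
    ∃ d ∈ firstDescentClasses, ∃ m e₁ N₁, IsCoprime m e₁ ∧ e₁ ≠ 0 ∧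
      (M ^ 2 + N + M * ξ) * e₁ ^ 2 = d * m ^ 2 * e ^ 2 ∧
      d * N₁ ^ 2 = d ^ 2 * m ^ 4 + cA * d * m ^ 2 * e₁ ^ 2 + cB * e₁ ^ 4 := by
  have hprod : (M ^ 2 + N + M * ξ) * (M ^ 2 + N - M * ξ) = cB * e ^ 4 := by
    linear_combination hN - M ^ 2 * hξ
  have ha : M ^ 2 + N + M * ξ ≠ 0 :=
    left_ne_zero_of_mul (hprod ▸ mul_ne_zero cB_ne_zero (pow_ne_zero 4 he))
  obtain ⟨d, hd, m, e₁, N₁, hme, -, he₁, h, hN₁⟩ := first_descent ha (pow_ne_zero 2 he)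
    (z := (M ^ 2 + N + M * ξ) * e * ξ) (by
      linear_combination -(M ^ 2 + N + M * ξ) * e ^ 2 * hprod -
        (M ^ 2 + N + M * ξ) ^ 2 * e ^ 2 * hξ)
  exact ⟨d, hd, m, e₁, N₁, hme, he₁, h, hN₁⟩

theorem not_θ_sq_dvd_of_halves {d' m' e₁' : ZCbrtTwo} (he : e ≠ 0)
    (hN : N ^ 2 = M ^ 4 + cA * M ^ 2 * e ^ 2 + cB * e ^ 4)
    (hξ : ξ ^ 2 = cA * e ^ 2 + 2 * M ^ 2 + 2 * N) (hme : IsCoprime m e₁) (hme' : IsCoprime m' e₁')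
    (ha : (M ^ 2 + N + M * ξ) * e₁ ^ 2 = d * m ^ 2 * e ^ 2)
    (ha' : (M ^ 2 + N + M * -ξ) * e₁' ^ 2 = d' * m' ^ 2 * e ^ 2) (hm : θ ^ 2 ∣ m) :
    ¬ θ ^ 2 ∣ m' := by
  intro hm'
  have he₁ : ¬ θ ∣ e₁ := fun h =>
    not_isCoprime_of_prime_dvd prime_θ ((dvd_pow_self θ two_ne_zero).trans hm) h hme
  have he₁' : ¬ θ ∣ e₁' := fun h =>
    not_isCoprime_of_prime_dvd prime_θ ((dvd_pow_self θ two_ne_zero).trans hm') h hme'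
  obtain ⟨k, rfl⟩ := hm
  obtain ⟨k', rfl⟩ := hm'
  refine not_θ_dvd_mul not_θ_dvd_twenty_seven
    (not_θ_dvd_mul (not_θ_dvd_pow he₁ 2) (not_θ_dvd_pow he₁' 2))
    ⟨θ ^ 3 * d * d' * k ^ 2 * k' ^ 2, ?_⟩
  refine mul_left_cancel₀ (mul_ne_zero (pow_ne_zero 4 prime_θ.ne_zero) (pow_ne_zero 4 he)) ?_
  rw [cB_eq] at hN
  linear_combination -(e₁ ^ 2 * e₁' ^ 2) * (hN - M ^ 2 * hξ) +
    (M ^ 2 + N + M * -ξ) * e₁' ^ 2 * ha + d * (θ ^ 2 * k) ^ 2 * e ^ 2 * ha'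

theorem exists_half (hMe : IsCoprime M e) (he : e ≠ 0)
    (hN : N ^ 2 = M ^ 4 + cA * M ^ 2 * e ^ 2 + cB * e ^ 4) :
    ∃ d m e₁ N₁, IsCoprime m e₁ ∧ e₁ ≠ 0 ∧ ¬ θ ∣ m ∧ (d = 1 ∨ d = -(ε * π₃) ∧ ¬ θ ^ 2 ∣ e₁) ∧
      d * N₁ ^ 2 = d ^ 2 * m ^ 4 + cA * d * m ^ 2 * e₁ ^ 2 + cB * e₁ ^ 4 ∧
      ord e = ord e₁ + 3 := by
  obtain ⟨ξ, N', hN', hξ⟩ := exists_sq_eq_of_quartic he hN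
  rw [← hN'] at hN
  have hξ' : (-ξ) ^ 2 = cA * e ^ 2 + 2 * M ^ 2 + 2 * N' := by rw [neg_sq, hξ]
  obtain ⟨d, hd, m, e₁, N₁, hme, he₁, ha, hN₁⟩ := exists_half_class he hN hξ
  obtain ⟨d', hd', m', e₁', N₁', hme', he₁', ha', hN₁'⟩ := exists_half_class he hN hξ'
  by_cases hm : θ ∣ m
  · have hm' : ¬ θ ∣ m' := fun h => not_θ_sq_dvd_of_halves he hN hξ hme hme' ha ha'
      (θ_sq_dvd_of_first_descent hd hme hm hN₁) (θ_sq_dvd_of_first_descent hd' hme' h hN₁')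
    exact ⟨d', m', e₁', N₁', hme', he₁', hm', firstDescentClass_of_not_θ_dvd hd' hm' hN₁', hN₁',
      ord_eq_ord_half_add_three hMe he hN hξ' hd' hm' he₁' ha' hN₁'⟩
  · exact ⟨d, m, e₁, N₁, hme, he₁, hm, firstDescentClass_of_not_θ_dvd hd hm hN₁, hN₁,
      ord_eq_ord_half_add_three hMe he hN hξ hd hm he₁ ha hN₁⟩

theorem three_le_ord_of_quartic (he : e ≠ 0)
    (hN : N ^ 2 = M ^ 4 + cA * M ^ 2 * e ^ 2 + cB * e ^ 4) : 3 ≤ ord e := by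
  obtain ⟨g, M, e, rfl, rfl, hMe⟩ := exists_eq_mul_isCoprime M e
  obtain ⟨n, hn⟩ := exists_eq_sq_of_sq_mul_eq_sq (c := g ^ 2)
    (pow_ne_zero 2 (left_ne_zero_of_mul he)) (x := M ^ 4 + cA * M ^ 2 * e ^ 2 + cB * e ^ 4) (y := N)
    (by linear_combination -hN)
  obtain ⟨_, _, _, _, -, -, -, -, -, hord⟩ :=
    exists_half hMe (right_ne_zero_of_mul he) hn.symm
  rw [ord_mul (left_ne_zero_of_mul he) (right_ne_zero_of_mul he)]
  lia

-- The curve has the point `(-27 / θ², 27 (3 - 4 θ) / θ³)`; adding it to the point with first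
-- coordinate `-ε π₃ m² / e²` gives a point whose denominator contradicts `three_le_ord_of_quartic`.
theorem not_first_descent_of_not_θ_dvd (hm : ¬ θ ∣ m) (he : ¬ θ ∣ e) (hd : d = -(ε * π₃)) :
    d * N ^ 2 ≠ d ^ 2 * m ^ 4 + cA * d * m ^ 2 * e ^ 2 + cB * e ^ 4 := by
  intro hN
  have hdθ : ¬ θ ∣ d := by rw [hd, θ_dvd_iff]; decide
  have hd3 : d * -27 = (ε ^ 2 * π₃ ^ 5) ^ 2 := by rw [hd]; decide
  have hR : (27 * (3 - 4 * θ)) ^ 2 = -27 * (729 - 27 * cA * θ ^ 2 + cB * θ ^ 4) := by decide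
  have h₁ : (d * m * N * θ ^ 3) ^ 2 = d * m ^ 2 * θ ^ 2 * ((d * m ^ 2 * θ ^ 2) ^ 2 +
      cA * (e * θ) ^ 2 * (d * m ^ 2 * θ ^ 2) + cB * (e * θ) ^ 4) := by
    linear_combination d * m ^ 2 * θ ^ 6 * hN
  have h₂ : (27 * (3 - 4 * θ) * e ^ 3) ^ 2 = -27 * e ^ 2 * ((-27 * e ^ 2) ^ 2 +
      cA * (e * θ) ^ 2 * (-27 * e ^ 2) + cB * (e * θ) ^ 4) := by
    linear_combination e ^ 6 * hR
  have hD : ¬ θ ∣ d * m ^ 2 * θ ^ 2 - -27 * e ^ 2 := by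
    rw [show d * m ^ 2 * θ ^ 2 - -27 * e ^ 2 = 27 * e ^ 2 + θ * (d * m ^ 2 * θ) by ring]
    exact not_θ_dvd_add (not_θ_dvd_mul not_θ_dvd_twenty_seven (not_θ_dvd_pow he 2)) ⟨_, rfl⟩
  have hne : d * m ^ 2 * θ ^ 2 * (27 * (3 - 4 * θ) * e ^ 3) ≠
      -27 * e ^ 2 * (d * m * N * θ ^ 3) := by
    have hodd : ¬ θ ∣ 27 * d * m * e ^ 2 * ((3 - 4 * θ) * (m * e) + θ * N) := by
      have h3 : ¬ θ ∣ 3 - 4 * θ := by rw [θ_dvd_iff]; decide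
      exact not_θ_dvd_mul (not_θ_dvd_mul (not_θ_dvd_mul (not_θ_dvd_mul not_θ_dvd_twenty_seven hdθ)
        hm) (not_θ_dvd_pow he 2)) (not_θ_dvd_add (not_θ_dvd_mul h3 (not_θ_dvd_mul hm he)) ⟨_, rfl⟩)
    intro h
    refine mul_ne_zero (pow_ne_zero 2 prime_θ.ne_zero) (ne_zero_of_not_θ_dvd hodd) ?_
    linear_combination h
  have hθ := prime_θ.ne_zero
  have he0 := ne_zero_of_not_θ_dvd he
  obtain ⟨k, n, hn⟩ := exists_sq_eq_quartic_of_chord (c := ε ^ 2 * π₃ ^ 5 * (m * θ * e)) h₁ h₂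
    (by linear_combination m ^ 2 * θ ^ 2 * e ^ 2 * hd3)
    (mul_ne_zero (by decide) (mul_ne_zero (mul_ne_zero (ne_zero_of_not_θ_dvd hm) hθ) he0)) hne
  have hD0 := ne_zero_of_not_θ_dvd hD
  have hord := three_le_ord_of_quartic (M := k) (N := n)
    (e := e * θ * (d * m ^ 2 * θ ^ 2 - -27 * e ^ 2))
    (mul_ne_zero (mul_ne_zero he0 hθ) hD0) (by linear_combination hn)
  rw [ord_mul (mul_ne_zero he0 hθ) hD0, ord_mul he0 hθ, ord_eq_zero.2 he, ord_eq_zero.2 hD,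
    ← pow_one θ, ord_θ_pow] at hord
  lia

theorem ord_mod_three_of_quartic (hMe : IsCoprime M e) (he : e ≠ 0)
    (hN : N ^ 2 = M ^ 4 + cA * M ^ 2 * e ^ 2 + cB * e ^ 4) : ord e % 3 = 1 := by
  induction hv : ord e using Nat.strong_induction_on generalizing M e N with
  | _ v ih =>
    obtain ⟨d, m, e₁, N₁, hme, he₁, hm, hd, hN₁, hord⟩ := exists_half hMe he hN
    rcases hd with rfl | ⟨hd, hθ⟩
    · have := ih (ord e₁) (by lia) hme he₁ (M := m) (N := N₁) (by linear_combination hN₁) rfl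
      lia
    · have hlt : ord e₁ < 2 := by rwa [θ_pow_dvd_iff_le_ord he₁, not_le] at hθ
      have hpos : ord e₁ ≠ 0 := fun h =>
        not_first_descent_of_not_θ_dvd hm (ord_eq_zero.1 h) hd hN₁
      lia

end Halving

section ValuationArgument

variable {x y z w p q ν : ZCbrtTwo}

theorem ne_zero_of_one_lt_ord (h : 1 < ord x) : x ≠ 0 := by
  rintro rfl
  exact h.ne' (multiplicity_zero θ)

theorem ord_sub_of_lt (hx : x ≠ 0) (h : ord x < ord y) : ord (x - y) = ord x := by
  rw [← neg_sub]
  exact (multiplicity_neg θ (y - x)).trans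
    (multiplicity_sub_of_gt h (FiniteMultiplicity.of_prime_left prime_θ hx))

theorem ord_lt_ord_sub (hx : x ≠ 0) (hy : y ≠ 0) (hxy : x - y ≠ 0) (h : ord x = ord y) :
    ord x < ord (x - y) := by
  obtain ⟨x', hx', hx'θ⟩ : ∃ x', x = θ ^ ord x * x' ∧ ¬ θ ∣ x' :=
    (FiniteMultiplicity.of_prime_left prime_θ hx).exists_eq_pow_mul_and_not_dvd
  obtain ⟨y', hy', hy'θ⟩ : ∃ y', y = θ ^ ord x * y' ∧ ¬ θ ∣ y' :=
    h ▸ (FiniteMultiplicity.of_prime_left prime_θ hy).exists_eq_pow_mul_and_not_dvd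
  have hsub : x - y = θ ^ ord x * (x' - y') := by rw [mul_sub, ← hx', ← hy']
  rw [← Nat.succ_le_iff, ← θ_pow_dvd_iff_le_ord hxy, Nat.succ_eq_add_one, pow_succ, hsub]
  exact mul_dvd_mul_left (θ ^ ord x) (θ_dvd_sub hx'θ hy'θ)

theorem ord_cases_of_sub_eq (hx : x ≠ 0) (hy : y ≠ 0) (hw : ¬ θ ∣ w) (h : x - y = θ ^ 3 * w) :
    ord x = 3 ∧ 3 < ord y ∨ ord y = 3 ∧ 3 < ord x ∨ ord x = ord y ∧ ord x < 3 := by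
  have hw0 := ne_zero_of_not_θ_dvd hw
  have hθ : (θ : ZCbrtTwo) ^ 3 ≠ 0 := pow_ne_zero 3 prime_θ.ne_zero
  have h3 : ord (x - y) = 3 := by
    rw [h, ord_mul hθ hw0, ord_θ_pow, ord_eq_zero.2 hw]
  rcases lt_trichotomy (ord x) (ord y) with hlt | heq | hlt
  · rw [ord_sub_of_lt hx hlt] at h3
    lia
  · have := ord_lt_ord_sub hx hy (h ▸ mul_ne_zero hθ hw0) heq
    lia
  · rw [← neg_sub, ord_neg, ord_sub_of_lt hy hlt] at h3
    lia

theorem exists_ord_add_eq_three (hp : ¬ θ ∣ p) (hq : q ≠ 0) (hθq : θ ∣ q) (h3 : 3 ∣ ord q)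
    (hν : ν ^ 2 = (p ^ 2 - q ^ 2) ^ 2 - (8 - 3 * θ ^ 2) * (p ^ 2 - q ^ 2) * (p * q) +
      (16 + 18 * θ - 12 * θ ^ 2) * (p * q) ^ 2) :
    ∃ ν', ν' ^ 2 = ν ^ 2 ∧ ord (ν' + (p ^ 2 - q ^ 2)) = 3 ∧ 6 ≤ ord q := by
  obtain ⟨W, hW⟩ : ∃ W, W = p ^ 2 - q ^ 2 := ⟨_, rfl⟩
  obtain ⟨X, hX⟩ : ∃ X, X = (3 - 4 * θ) * W + θ ^ 2 * ⟨9, -6, 4⟩ * (p * q) := ⟨_, rfl⟩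
  rw [← hW] at hν ⊢
  have hWθ : ¬ θ ∣ W := by
    rw [hW, sub_eq_add_neg]
    exact not_θ_dvd_add (not_θ_dvd_pow hp 2) (dvd_neg.2 (dvd_pow hθq two_ne_zero))
  have hXθ : ¬ θ ∣ X := by
    have h34 : ¬ θ ∣ 3 - 4 * θ := by rw [θ_dvd_iff]; decide
    rw [hX]
    exact not_θ_dvd_add (not_θ_dvd_mul h34 hWθ) (hθq.mul_left p |>.mul_left _)
  have hprod : (ν + W) * (ν - W) = θ ^ 2 * (p * q * X) := by
    have h8 : 8 - 3 * θ ^ 2 = -(θ ^ 2 * (3 - 4 * θ)) := by decide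
    have h16 : 16 + 18 * θ - 12 * θ ^ 2 = θ ^ 4 * ⟨9, -6, 4⟩ := by decide
    rw [h8, h16] at hν
    rw [hX]
    linear_combination hν
  have hp0 := ne_zero_of_not_θ_dvd hp
  have hX0 := ne_zero_of_not_θ_dvd hXθ
  have hθ2 : (θ : ZCbrtTwo) ^ 2 ≠ 0 := pow_ne_zero 2 prime_θ.ne_zero
  have hne : (ν + W) * (ν - W) ≠ 0 :=
    hprod ▸ mul_ne_zero hθ2 (mul_ne_zero (mul_ne_zero hp0 hq) hX0)
  have hadd := left_ne_zero_of_mul hne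
  have hsub := right_ne_zero_of_mul hne
  have hord : ord (ν + W) + ord (ν - W) = 2 + ord q := by
    rw [← ord_mul hadd hsub, hprod, ord_mul hθ2 (mul_ne_zero (mul_ne_zero hp0 hq) hX0),
      ord_mul (mul_ne_zero hp0 hq) hX0, ord_mul hp0 hq, ord_θ_pow, ord_eq_zero.2 hp,
      ord_eq_zero.2 hXθ]
    lia
  have hq0 : ord q ≠ 0 := fun h => ord_eq_zero.1 h hθq
  rcases ord_cases_of_sub_eq hadd hsub hWθ (by linear_combination W * two_eq) with
    ⟨h, h'⟩ | ⟨h, h'⟩ | ⟨h, h'⟩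
  · exact ⟨ν, rfl, h, by lia⟩
  · exact ⟨-ν, neg_sq ν, by rw [← ord_neg, show -(-ν + W) = ν - W by ring, h], by lia⟩
  · lia

theorem ord_eq_six {a : ZCbrtTwo} (hp : ¬ θ ∣ p) (hq : q ≠ 0) (hy : ord (ν + w) = 3)
    (h : 6 ≤ ord q) (ha : a = 2 * w - (8 - 3 * θ ^ 2) * (p * q) + 2 * ν) : ord a = 6 := by
  have h34 : ¬ θ ∣ 4 * θ - 3 := by rw [θ_dvd_iff]; decide
  have h34' := ne_zero_of_not_θ_dvd h34
  have hp0 := ne_zero_of_not_θ_dvd hp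
  have hθ := prime_θ.ne_zero
  have hx : ord (θ ^ 3 * (ν + w)) = 6 := by
    rw [ord_mul (pow_ne_zero 3 hθ) (ne_zero_of_one_lt_ord (by lia)), ord_θ_pow, hy]
  have hpq : ord (θ ^ 2 * ((4 * θ - 3) * (p * q))) = 2 + ord q := by
    rw [ord_mul (pow_ne_zero 2 hθ) (mul_ne_zero h34' (mul_ne_zero hp0 hq)),
      ord_mul h34' (mul_ne_zero hp0 hq), ord_mul hp0 hq, ord_θ_pow, ord_eq_zero.2 h34,
      ord_eq_zero.2 hp, zero_add, zero_add]
  have hsub : a = θ ^ 3 * (ν + w) - θ ^ 2 * ((4 * θ - 3) * (p * q)) := by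
    rw [ha]
    linear_combination (w + ν - 4 * p * q) * two_eq
  rw [hsub, ord_sub_of_lt (ne_zero_of_one_lt_ord (by lia)) (by lia), hx]

-- The point with first coordinate `a / q²` lies on `Y² = X (X² + cA X + cB)`.
theorem sq_ne_of_three_dvd_ord (hp : ¬ θ ∣ p) (hq : q ≠ 0) (hθq : θ ∣ q) (h3 : 3 ∣ ord q) :
    ν ^ 2 ≠ (p ^ 2 - q ^ 2) ^ 2 - (8 - 3 * θ ^ 2) * (p ^ 2 - q ^ 2) * (p * q) +
      (16 + 18 * θ - 12 * θ ^ 2) * (p * q) ^ 2 := by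
  intro hν
  obtain ⟨ν, hν', hadd, hq6⟩ := exists_ord_add_eq_three hp hq hθq h3 hν
  rw [← hν'] at hν
  have hp0 := ne_zero_of_not_θ_dvd hp
  obtain ⟨a, ha⟩ : ∃ a, a = 2 * (p ^ 2 - q ^ 2) - (8 - 3 * θ ^ 2) * (p * q) + 2 * ν := ⟨_, rfl⟩
  have hcurve : p ^ 2 * (a ^ 2 + cA * a * q ^ 2 + cB * q ^ 4) = a * (p ^ 2 + q ^ 2 + ν) ^ 2 := by
    have hA : cA = 4 + (16 + 18 * θ - 12 * θ ^ 2) := by decide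
    have hB : cB = 4 * (16 + 18 * θ - 12 * θ ^ 2) - (8 - 3 * θ ^ 2) ^ 2 := by decide
    rw [hA, hB, ha]
    linear_combination
      (-2 * ν - 2 * p ^ 2 + p * q * (8 - 3 * θ ^ 2) - 2 * q ^ 2) * hν
  have ha6 : ord a = 6 := ord_eq_six hp hq hadd hq6 ha
  have ha0 : a ≠ 0 := ne_zero_of_one_lt_ord (by lia)
  obtain ⟨d, hd, m, e, N, hme, hm0, he0, hae, hN⟩ := first_descent (a := a * p ^ 2)
    (b := (p * q) ^ 2) (z := a * p ^ 3 * q * (p ^ 2 + q ^ 2 + ν))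
    (mul_ne_zero ha0 (pow_ne_zero 2 hp0)) (pow_ne_zero 2 (mul_ne_zero hp0 hq))
    (by linear_combination a * p ^ 6 * q ^ 2 * hcurve)
  have hae' : a * e ^ 2 = d * m ^ 2 * q ^ 2 :=
    mul_left_cancel₀ (pow_ne_zero 2 hp0) (by linear_combination hae)
  have hdθ := not_θ_dvd_of_mem_firstDescentClasses hd
  have hord : 6 + 2 * ord e = 2 * ord m + 2 * ord q := by
    have := congrArg ord hae'
    rwa [ord_mul ha0 (pow_ne_zero 2 he0), ord_pow he0, ha6,
      ord_mul (mul_ne_zero (ne_zero_of_not_θ_dvd hdθ) (pow_ne_zero 2 hm0)) (pow_ne_zero 2 hq),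
      ord_mul (ne_zero_of_not_θ_dvd hdθ) (pow_ne_zero 2 hm0), ord_pow hm0, ord_pow hq,
      ord_eq_zero.2 hdθ, zero_add] at this
  have hmθ : ¬ θ ∣ m := by
    intro hm
    have := ord_eq_zero.2 fun he => not_isCoprime_of_prime_dvd prime_θ hm he hme
    lia
  have hm := ord_eq_zero.2 hmθ
  rcases firstDescentClass_of_not_θ_dvd hd hmθ hN with rfl | ⟨-, he⟩
  · have := ord_mod_three_of_quartic hme he0 (N := N) (by linear_combination hN)
    lia
  · rw [θ_pow_dvd_iff_le_ord he0] at he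
    lia

end ValuationArgument

section Squares

variable {x y k : ZCbrtTwo} {c : ℤ}

theorem isCoprime_intCast {a b : ℤ} (h : IsCoprime a b) :
    IsCoprime (a : ZCbrtTwo) (b : ZCbrtTwo) :=
  h.map (Int.castRingHom ZCbrtTwo)

theorem mul_cofactor_of_norm_eq (h : norm x = c) : x * cofactor x = c := by
  rw [mul_cofactor, h]
  rfl

-- Modulo `2`, a square has no `θ`-coefficient whereas `ε` times an odd square has one.
theorem ne_ε_mul_sq (hx : ¬ θ ∣ x) (hb : 2 ∣ x.b) (n : ZCbrtTwo) : x ≠ ε * n ^ 2 := by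
  rintro rfl
  rw [θ_dvd_iff] at hx
  have hn : 2 ∣ (n ^ 2).b := ⟨n.a * n.b + n.c ^ 2, by rw [sq, mul_b]; ring⟩
  simp only [ε, mul_a, mul_b] at hx hb
  lia

theorem exists_eq_sq_of_isCoprime (hxy : IsCoprime x y) (hsq : ∃ z, x * y = z ^ 2)
    (hpos : 0 < norm x) (hx : ¬ θ ∣ x) (hb : 2 ∣ x.b) : ∃ n, x = n ^ 2 := by
  obtain ⟨z, hz⟩ := hsq
  obtain ⟨n, u, hu⟩ := exists_associated_pow_of_mul_eq_pow' hxy hz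
  obtain ⟨s, w, -, hs, hcases⟩ := exists_eq_mul_sq_of_isUnit u.isUnit
  have hxs : x = s * (n * w) ^ 2 := by rw [← hu, hs]; ring
  have hnorm : norm x = norm s * norm (n * w) ^ 2 := by
    rw [hxs, norm_mul, sq (n * w), norm_mul (n * w), sq]
  have hs_pos : 0 < norm s := pos_of_mul_pos_left (hnorm ▸ hpos) (sq_nonneg _)
  rcases hcases with rfl | rfl | rfl | rfl
  · exact ⟨n * w, by rw [hxs, one_mul]⟩
  · exact absurd hs_pos (by decide)
  · exact absurd hxs (ne_ε_mul_sq hx hb _)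
  · exact absurd hs_pos (by decide)

theorem isCoprime_cofactor {r s t : ℕ} (hθ : ¬ θ ∣ x) (hπ₃ : ¬ π₃ ∣ x) (hk : IsCoprime x k)
    (h : x ∣ cofactor x - 3 ^ r * θ ^ s * k ^ t) : IsCoprime x (cofactor x) := by
  have h3 : IsCoprime x 3 := by
    rw [show (3 : ZCbrtTwo) = ε * π₃ ^ 3 by decide]
    exact (isCoprime_mul_unit_left_right εUnit.isUnit x _).2
      ((prime_π₃.irreducible.coprime_iff_not_dvd.2 hπ₃).symm.pow_right)
  have hθ' : IsCoprime x θ := (prime_θ.irreducible.coprime_iff_not_dvd.2 hθ).symm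
  obtain ⟨y, hy⟩ := h
  rw [show cofactor x = 3 ^ r * θ ^ s * k ^ t + x * y by linear_combination hy]
  exact ((h3.pow_right.mul_right hθ'.pow_right).mul_right hk.pow_right).add_mul_left_right y

end Squares

section FirstCase

variable {U k p q m : ℤ}

theorem exists_cofactor_eq_sq (hU : ¬ 2 ∣ U) (hU3 : ¬ 3 ∣ U) (hUk : IsCoprime U k)
    (h : U ^ 3 - 108 * k ^ 3 = m ^ 2) : ∃ ν, cofactor (⟨U, 0, -3 * k⟩ : ZCbrtTwo) = ν ^ 2 := by
  obtain ⟨F, hF⟩ : ∃ F : ZCbrtTwo, F = ⟨U, 0, -3 * k⟩ := ⟨_, rfl⟩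
  have hF' : F = U + k * (-3 * θ ^ 2) := by rw [hF]; ext <;> simp [θ, sq, mul_comm]
  have hnorm : norm F = m ^ 2 := by rw [← h, hF]; simp only [norm]; ring
  have hm : m ≠ 0 := by
    rintro rfl
    exact hU (Int.prime_two.dvd_of_dvd_pow (n := 3) ⟨54 * k ^ 3, by linear_combination h⟩)
  have hFθ : ¬ θ ∣ F := by rwa [θ_dvd_iff, hF]
  have hFπ₃ : ¬ π₃ ∣ F := by rw [π₃_dvd_iff, hF]; dsimp only; lia
  have hFk : IsCoprime F (k : ZCbrtTwo) := by
    rw [hF']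
    exact (isCoprime_intCast hUk).add_mul_left_left _
  have hdvd : F ∣ cofactor F - 3 ^ 3 * θ ^ 4 * (k : ZCbrtTwo) ^ 2 := by
    refine ⟨U + 6 * θ ^ 2 * k, ?_⟩
    rw [hF]
    ext <;> simp [cofactor, θ, pow_succ] <;> ring
  have hcop := isCoprime_cofactor hFθ hFπ₃ hFk hdvd
  have hmul : F * cofactor F = (m : ZCbrtTwo) ^ 2 := by
    rw [mul_cofactor_of_norm_eq hnorm, Int.cast_pow]
  obtain ⟨n, hn⟩ := exists_eq_sq_of_isCoprime hcop ⟨_, hmul⟩ (hnorm ▸ by positivity) hFθ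
    (by rw [hF]; exact dvd_zero 2)
  rw [← hF]
  refine exists_eq_sq_of_sq_mul_eq_sq (c := n) ?_ (hmul.symm ▸ congrArg (· * cofactor F) hn.symm)
  rintro rfl
  exact ne_zero_of_not_θ_dvd hFθ (by rw [hn]; ring)

theorem three_dvd_ord_intCast (hq : q ≠ 0) : 3 ∣ ord (q : ZCbrtTwo) := by
  obtain ⟨n, q', hq', rfl⟩ := WfDvdMonoid.max_power_factor hq Int.prime_two.irreducible
  have hθ : ¬ θ ∣ (q' : ZCbrtTwo) := by rwa [θ_dvd_iff]
  rw [Int.cast_mul, Int.cast_pow, Int.cast_ofNat, two_eq, ← pow_mul,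
    ord_mul (pow_ne_zero _ prime_θ.ne_zero) (ne_zero_of_not_θ_dvd hθ), ord_θ_pow,
    ord_eq_zero.2 hθ]
  exact ⟨n, rfl⟩

theorem not_three_dvd_of_isCoprime (hpq : IsCoprime p q) :
    ¬ 3 ∣ p ^ 2 - q ^ 2 - 4 * (p * q) := by
  intro h3
  have key : ∀ a b : ZMod 3, a ^ 2 - b ^ 2 - 4 * (a * b) = 0 → a = 0 ∧ b = 0 := by decide
  have h := (ZMod.intCast_zmod_eq_zero_iff_dvd _ 3).2 h3
  push_cast at h
  obtain ⟨hp, hq⟩ := key p q h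
  exact not_isCoprime_of_prime_dvd Int.prime_three ((ZMod.intCast_zmod_eq_zero_iff_dvd p 3).1 hp)
    ((ZMod.intCast_zmod_eq_zero_iff_dvd q 3).1 hq) hpq

theorem eq_zero_of_cube_sub_eq_sq (hpq : IsCoprime p q) (hp : ¬ 2 ∣ p) (hq : 2 ∣ q)
    (h : (p ^ 2 - q ^ 2 - 4 * (p * q)) ^ 3 - 108 * (p * q) ^ 3 = m ^ 2) : q = 0 := by
  by_contra hq0
  obtain ⟨U, hU⟩ : ∃ U, U = p ^ 2 - q ^ 2 - 4 * (p * q) := ⟨_, rfl⟩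
  rw [← hU] at h
  have hU2 : ¬ 2 ∣ U := by
    rw [hU, show p ^ 2 - q ^ 2 - 4 * (p * q) = p ^ 2 + q * (-q - 4 * p) by ring,
      dvd_add_left (hq.mul_right _)]
    exact fun h => hp (Int.prime_two.dvd_of_dvd_pow h)
  have hUp : IsCoprime U p := by
    rw [hU, show p ^ 2 - q ^ 2 - 4 * (p * q) = -q ^ 2 + p * (p - 4 * q) by ring]
    exact (hpq.symm.pow_left.neg_left).add_mul_left_left _
  have hUq : IsCoprime U q := by
    rw [hU, show p ^ 2 - q ^ 2 - 4 * (p * q) = p ^ 2 + q * (-q - 4 * p) by ring]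
    exact hpq.pow_left.add_mul_left_left _
  obtain ⟨ν, hν⟩ := exists_cofactor_eq_sq hU2 (hU ▸ not_three_dvd_of_isCoprime hpq)
    (hUp.mul_right hUq) h
  refine sq_ne_of_three_dvd_ord (p := p) (q := q) (ν := ν) ?_ ?_ ?_ (three_dvd_ord_intCast hq0) ?_
  · rwa [θ_dvd_iff]
  · exact fun h => hq0 (congrArg CbrtTwo.a h)
  · rwa [θ_dvd_iff]
  · rw [← hν, hU]
    ext <;> simp [cofactor, θ, sq] <;> ring

end FirstCase

section SecondCase

variable {P T m : ℤ}

theorem five_mul_sq_ne_sq {k : ℤ} (hm : m ≠ 0) : 5 * m ^ 2 ≠ k ^ 2 := by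
  intro h
  obtain ⟨n, hn⟩ := exists_eq_sq_of_sq_mul_eq_sq hm (x := 5) (y := k) (by linear_combination h)
  exact (Int.prime_ofNat_iff.2 Nat.prime_five).irreducible.not_isSquare ⟨n, by rw [hn, sq]⟩

theorem π₅_dvd_or_isCoprime_five {x : ZCbrtTwo} (h : ¬ π₂₅ ∣ x) : π₅ ∣ x ∨ IsCoprime x 5 := by
  refine or_iff_not_imp_left.2 fun h₅ => ?_
  rw [← isCoprime_mul_unit_left_right (εUnit ^ 2).isUnit x 5,
    show ((εUnit ^ 2 : ZCbrtTwoˣ) : ZCbrtTwo) * 5 = π₅ * π₂₅ by decide]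
  exact IsCoprime.mul_right (prime_π₅.irreducible.coprime_iff_not_dvd.2 h₅).symm
    (prime_π₂₅.irreducible.coprime_iff_not_dvd.2 h).symm

theorem not_isCoprime_five {x : ZCbrtTwo} (hm : m ≠ 0) (hx : norm x = 5 * m ^ 2)
    (hcop : IsCoprime x (cofactor x)) (hθ : ¬ θ ∣ x) (hb : 2 ∣ x.b) : ¬ IsCoprime x 5 := by
  intro h5
  have hmul := mul_cofactor_of_norm_eq hx
  push_cast at hmul
  obtain ⟨y, hy⟩ := h5.symm.dvd_of_dvd_mul_left (Dvd.intro _ hmul.symm)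
  rw [hy] at hcop hmul
  obtain ⟨n, rfl⟩ := exists_eq_sq_of_isCoprime hcop.of_mul_right_right
    ⟨m, mul_left_cancel₀ (a := (5 : ZCbrtTwo)) (by decide) (by linear_combination hmul)⟩
    (hx ▸ by positivity) hθ hb
  exact five_mul_sq_ne_sq hm (k := norm n) (by rw [← hx, sq, norm_mul, sq])

theorem exists_eq_π₅_mul_sq_of_dvd {x : ZCbrtTwo} (hm : m ≠ 0) (hx : norm x = 5 * m ^ 2)
    (hcop : IsCoprime x (cofactor x)) (hθ : ¬ θ ∣ x) (hb : 2 ∣ x.b) (h₂₅ : ¬ π₂₅ ∣ x)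
    (h₅ : π₅ ∣ x) : ∃ n, x = π₅ * n ^ 2 := by
  have h5 : π₅ * π₂₅ = 5 * ε ^ 2 := by decide
  have hε : IsUnit (ε ^ 2) := εUnit.isUnit.pow 2
  have h5dvd : π₂₅ ∣ 5 := (π₂₅_dvd_iff 5).2 (by decide)
  have hmul := mul_cofactor_of_norm_eq hx
  push_cast at hmul
  have h₂₅' : π₂₅ ∣ cofactor x := by
    refine (prime_π₂₅.dvd_or_dvd ?_).resolve_left h₂₅
    rw [hmul]
    exact h5dvd.mul_right _
  obtain ⟨y, rfl⟩ := h₅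
  obtain ⟨y', hy'⟩ := h₂₅'
  rw [hy'] at hcop hmul
  have hy_norm : norm y = m ^ 2 := by
    rw [norm_mul, show norm π₅ = 5 by decide] at hx
    exact mul_left_cancel₀ (by norm_num) hx
  have hyy' : y * (ε ^ 2 * y') = m ^ 2 :=
    mul_left_cancel₀ (a := (5 : ZCbrtTwo)) (by decide) (by linear_combination hmul - y * y' * h5)
  have hyy'_cop : IsCoprime y (ε ^ 2 * y') :=
    (isCoprime_mul_unit_left_right hε y y').2 hcop.of_mul_left_right.of_mul_right_right
  have hyb : 2 ∣ y.b := by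
    simp only [π₅, mul_b] at hb
    lia
  obtain ⟨n, rfl⟩ := exists_eq_sq_of_isCoprime hyy'_cop ⟨m, hyy'⟩ (hy_norm ▸ by positivity)
    (fun h => hθ (h.mul_left π₅)) hyb
  exact ⟨n, rfl⟩

theorem exists_eq_π₅_mul_sq (hPT : IsCoprime P T) (hP : ¬ 2 ∣ P) (hT : ¬ 3 ∣ T)
    (h : 16 * T ^ 3 + 27 * P ^ 3 = 5 * m ^ 2) :
    ∃ n : ZCbrtTwo, ⟨3 * P, 2 * T, 0⟩ = π₅ * n ^ 2 := by
  obtain ⟨L, hL⟩ : ∃ L : ZCbrtTwo, L = ⟨3 * P, 2 * T, 0⟩ := ⟨_, rfl⟩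
  have hnorm : norm L = 5 * m ^ 2 := by rw [← h, hL]; simp only [norm]; ring
  have hm : m ≠ 0 := by
    rintro rfl
    have h2 : 2 ∣ 3 ^ 3 * P ^ 3 := ⟨-8 * T ^ 3, by linear_combination h⟩
    exact hP (Int.prime_two.dvd_of_dvd_pow
      ((Int.prime_two.dvd_or_dvd h2).resolve_left (by decide)))
  have hLθ : ¬ θ ∣ L := by rw [θ_dvd_iff, hL]; dsimp only; lia
  have hLπ₃ : ¬ π₃ ∣ L := by rw [π₃_dvd_iff, hL]; dsimp only; lia
  have hLπ₂₅ : ¬ π₂₅ ∣ L := by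
    rw [π₂₅_dvd_iff, hL]
    rintro ⟨h₁, h₂⟩
    exact not_isCoprime_of_prime_dvd (Int.prime_ofNat_iff.2 Nat.prime_five) (p := 5)
      (by dsimp only at h₁; lia) (by dsimp only at h₂; lia) hPT
  have hLT : IsCoprime L (T : ZCbrtTwo) := by
    rw [show L = ((3 * P : ℤ) : ZCbrtTwo) + T * (2 * θ) by rw [hL]; ext <;> simp [θ, mul_comm]]
    exact (isCoprime_intCast (IsCoprime.mul_left
      (Int.prime_three.irreducible.coprime_iff_not_dvd.2 hT) hPT)).add_mul_left_left _
  have hdvd : L ∣ cofactor L - 3 ^ 1 * θ ^ 8 * (T : ZCbrtTwo) ^ 2 := by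
    refine ⟨3 * P - 4 * θ * T, ?_⟩
    rw [hL]
    ext <;> simp [cofactor, θ, pow_succ] <;> ring
  have hcop := isCoprime_cofactor hLθ hLπ₃ hLT hdvd
  have hLb : 2 ∣ L.b := by rw [hL]; exact Dvd.intro _ rfl
  rw [← hL]
  exact (π₅_dvd_or_isCoprime_five hLπ₂₅).elim
    (exists_eq_π₅_mul_sq_of_dvd hm hnorm hcop hLθ hLb hLπ₂₅)
    fun h5 => absurd h5 (not_isCoprime_five hm hnorm hcop hLθ hLb)

end SecondCase

-- Modulo `17`, `2` is the cube of `8`, and `3 P + 8 · 2 T ≡ 2 (a + 4 b) ^ 2`.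
theorem seventeen_dvd_of_eq_π₅_mul_sq {a b : ℤ} {n : ZCbrtTwo}
    (h : ⟨3 * (a ^ 2 - b ^ 2), 2 * (a ^ 2 + a * b - b ^ 2), 0⟩ = π₅ * n ^ 2) :
    17 ∣ a + 4 * b := by
  let φ : ZCbrtTwo →+* ZMod 17 := evalHom (Int.castRingHom (ZMod 17)) 8 (by decide)
  have hφ (x : ZCbrtTwo) : φ x = x.a + x.b * 8 + x.c * 8 ^ 2 := rfl
  have hπ : φ π₅ = 6 := by decide
  have h17 : (17 : ZMod 17) = 0 := by decide
  have hres : ∀ u n : ZMod 17, 2 * u ^ 2 = 6 * n ^ 2 → u = 0 := by decide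
  have key := congrArg φ h
  rw [map_mul, map_pow, hπ, hφ] at key
  push_cast at key
  have := hres (a + 4 * b) (φ n)
    (by linear_combination key + (3 * (b : ZMod 17) ^ 2 - (a : ZMod 17) ^ 2) * h17)
  exact (ZMod.intCast_zmod_eq_zero_iff_dvd _ 17).1 (by push_cast; exact this)

end CbrtTwo

section SquareFactors

variable {x y z q : ℤ}

theorem exists_eq_sq_and_eq_sq (hx : 0 < x) (hxy : IsCoprime x y) (h : x * y = z ^ 2) :
    ∃ m n, x = m ^ 2 ∧ y = n ^ 2 := by
  obtain ⟨m, hm | hm⟩ := Int.sq_of_isCoprime hxy h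
  · have hm0 : m ≠ 0 := by rintro rfl; simp [hm] at hx
    obtain ⟨n, hn⟩ := exists_eq_sq_of_sq_mul_eq_sq hm0 (hm ▸ h)
    exact ⟨m, n, hm, hn⟩
  · exact absurd hx (by rw [hm]; nlinarith [sq_nonneg m])

theorem eq_sq_or_eq_prime_mul_sq (hq : Prime q) (hqx : ¬ q ^ 2 ∣ x)
    (hxy : ∀ p, Prime p → p ∣ x → p ∣ y → p ∣ q) (h : x * y = z ^ 2) :
    ∃ r, (x = r ^ 2 ∨ x = -r ^ 2) ∨ x = q * r ^ 2 ∨ x = -(q * r ^ 2) := by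
  have hx : x ≠ 0 := by rintro rfl; exact hqx (dvd_zero _)
  by_cases hq' : q ∣ x
  · obtain ⟨x, rfl⟩ := hq'
    have hqx' : ¬ q ∣ x := fun hd => hqx (by rw [sq]; exact mul_dvd_mul_left q hd)
    have hcop : IsCoprime x (q * y) := by
      refine isCoprime_of_prime_dvd (fun h0 => right_ne_zero_of_mul hx h0.1)
        fun p hp hpx hpy => hqx' (dvd_of_prime_dvd_prime hp hq ?_ hpx)
      exact (hp.dvd_or_dvd hpy).elim id (hxy p hp (hpx.mul_left q))
    obtain ⟨r, rfl | rfl⟩ := Int.sq_of_isCoprime (c := z) hcop (by rw [← h]; ring)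
    · exact ⟨r, .inr (.inl rfl)⟩
    · exact ⟨r, .inr (.inr (mul_neg _ _))⟩
  · have hcop : IsCoprime x y := isCoprime_of_prime_dvd (fun h0 => hx h0.1)
      fun p hp hpx hpy => hq' (dvd_of_prime_dvd_prime hp hq (hxy p hp hpx hpy) hpx)
    exact (Int.sq_of_isCoprime hcop h).imp fun _ => .inl

end SquareFactors

namespace GenusFourCurve

section Forms

variable {R : Type*} [CommRing R]

/-- The homogenisation of `x² + 1`. -/
def α (a b : R) : R := a ^ 2 + b ^ 2

/-- The homogenisation of `3x² + 2x - 3`. -/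
def γ (a b : R) : R := 3 * a ^ 2 + 2 * (a * b) - 3 * b ^ 2

/-- The homogenisation of `43x⁶ + 48x⁵ - 81x⁴ - 80x³ + 81x² + 48x - 43`. -/
def Γ (a b : R) : R :=
  43 * a ^ 6 + 48 * a ^ 5 * b - 81 * a ^ 4 * b ^ 2 - 80 * a ^ 3 * b ^ 3 + 81 * a ^ 2 * b ^ 4 +
    48 * a * b ^ 5 - 43 * b ^ 6

/-- The form `γ (p - q) (p + q) / 2`. -/
def γ' (p q : R) : R := p ^ 2 - 6 * (p * q) - q ^ 2

/-- The form `Γ (p - q) (p + q) / 16`. -/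
def Γ' (p q : R) : R := (p ^ 2 - q ^ 2 - 4 * (p * q)) ^ 3 - 108 * (p * q) ^ 3

/-- The form `Γ (17t - 4b) b / 17²`; the substitution is a root of `Γ` modulo `17`. -/
def Γ₁₇ (t b : R) : R :=
  3591403 * t ^ 6 - 4834392 * t ^ 5 * b + 2681631 * t ^ 4 * b ^ 2 - 784448 * t ^ 3 * b ^ 3 +
    127665 * t ^ 2 * b ^ 4 - 10968 * t * b ^ 5 + 389 * b ^ 6

variable (a b : R)

theorem α_neg_left : α (-b) a = α a b := by unfold α; ring

theorem γ_neg_left : γ (-b) a = -γ a b := by unfold γ; ring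

theorem Γ_neg_left : Γ (-b) a = -Γ a b := by unfold Γ; ring

theorem γ'_neg_left : γ' (-b) a = -γ' a b := by unfold γ'; ring

theorem Γ'_neg_left : Γ' (-b) a = -Γ' a b := by unfold Γ'; ring

theorem α_sub_add : α (a - b) (a + b) = 2 * α a b := by unfold α; ring

theorem γ_sub_add : γ (a - b) (a + b) = 2 * γ' a b := by unfold γ γ'; ring

theorem Γ_sub_add : Γ (a - b) (a + b) = 16 * Γ' a b := by unfold Γ Γ'; ring

theorem Γ_seventeen_mul_sub : Γ (17 * a - 4 * b) b = 17 ^ 2 * Γ₁₇ a b := by unfold Γ Γ₁₇; ring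

theorem Γ_eq_γ_mul_add : Γ a b =
    γ a b * (2 * (γ a b ^ 2 - 3 * γ a b * (a ^ 2 - b ^ 2) + 3 * (a ^ 2 - b ^ 2) ^ 2)) +
      5 ^ 2 * (a ^ 2 - b ^ 2) ^ 3 := by
  unfold Γ γ; ring

@[simp, norm_cast]
theorem cast_α (a b : ℤ) : ((α a b : ℤ) : R) = α (a : R) b := by simp [α]

@[simp, norm_cast]
theorem cast_γ (a b : ℤ) : ((γ a b : ℤ) : R) = γ (a : R) b := by simp [γ]

@[simp, norm_cast]
theorem cast_Γ (a b : ℤ) : ((Γ a b : ℤ) : R) = Γ (a : R) b := by simp [Γ]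

@[simp, norm_cast]
theorem cast_γ' (a b : ℤ) : ((γ' a b : ℤ) : R) = γ' (a : R) b := by simp [γ']

@[simp, norm_cast]
theorem cast_Γ₁₇ (a b : ℤ) : ((Γ₁₇ a b : ℤ) : R) = Γ₁₇ (a : R) b := by simp [Γ₁₇]

end Forms

section CommonPrimes

variable {a b p : ℤ}

theorem ofNat_dvd_iff_intCast_eq_zero {n : ℕ} [n.AtLeastTwo] {x : ℤ} :
    (ofNat(n) : ℤ) ∣ x ↔ (x : ZMod ofNat(n)) = 0 :=
  (ZMod.intCast_zmod_eq_zero_iff_dvd x n).symm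

theorem prime_five : Prime (5 : ℤ) := Int.prime_ofNat_iff.2 Nat.prime_five

theorem prime_seventeen : Prime (17 : ℤ) := Int.prime_ofNat_iff.2 (by norm_num)

theorem α_pos (h : IsCoprime a b) : 0 < α a b :=
  lt_of_le_of_ne (by unfold α; positivity) h.sq_add_sq_ne_zero.symm

theorem isCoprime_α_right (h : IsCoprime a b) : IsCoprime (α a b) b := by
  rw [α, sq b]
  exact h.pow_left.add_mul_left_left b

theorem isCoprime_sq_sub_sq_mul (h : IsCoprime a b) : IsCoprime (a ^ 2 - b ^ 2) (a * b) := by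
  refine IsCoprime.mul_right ?_ ?_
  · rw [show a ^ 2 - b ^ 2 = -b ^ 2 + a * a by ring]
    exact h.symm.pow_left.neg_left.add_mul_left_left a
  · rw [show a ^ 2 - b ^ 2 = a ^ 2 + b * -b by ring]
    exact h.pow_left.add_mul_left_left (-b)

theorem two_dvd_add_of_two_dvd_α (h : 2 ∣ α a b) : 2 ∣ a + b := by
  refine Int.prime_two.dvd_of_dvd_pow (n := 2) ?_
  rw [show (a + b) ^ 2 = α a b + 2 * (a * b) by unfold α; ring]
  exact dvd_add h (dvd_mul_right 2 _)

theorem two_dvd_add_of_two_dvd_γ (h : 2 ∣ γ a b) : 2 ∣ a + b := by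
  refine Int.prime_two.dvd_of_dvd_pow (n := 2) ?_
  rw [show (a + b) ^ 2 = γ a b + 2 * (2 * b ^ 2 - a ^ 2) by unfold γ; ring]
  exact dvd_add h (dvd_mul_right 2 _)

theorem two_dvd_add_of_two_dvd_γ' (h : 2 ∣ γ' a b) : 2 ∣ a + b := by
  refine Int.prime_two.dvd_of_dvd_pow (n := 2) ?_
  rw [show (a + b) ^ 2 = γ' a b + 2 * (4 * (a * b) + b ^ 2) by unfold γ'; ring]
  exact dvd_add h (dvd_mul_right 2 _)

theorem dvd_two_or_dvd_five_of_dvd_α_of_dvd_γ (h : IsCoprime a b) (hp : Prime p)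
    (hα : p ∣ α a b) (hγ : p ∣ γ a b) : p ∣ 2 ∨ p ∣ 5 := by
  have hb : ¬ p ∣ b := fun hb => not_isCoprime_of_prime_dvd hp hα hb (isCoprime_α_right h)
  have key : p ∣ 2 ^ 2 * 5 * b ^ 3 := by
    rw [show 2 ^ 2 * 5 * b ^ 3 = α a b * (3 * a + 11 * b) - γ a b * (a + 3 * b) by
      unfold α γ; ring]
    exact dvd_sub (hα.mul_right _) (hγ.mul_right _)
  rw [hp.dvd_mul, hp.dvd_mul, hp.dvd_pow_iff_dvd two_ne_zero, hp.dvd_pow_iff_dvd three_ne_zero]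
    at key
  exact key.resolve_right hb

theorem dvd_two_of_dvd_γ_of_dvd_sq_sub_sq (h : IsCoprime a b) (hp : Prime p)
    (hγ : p ∣ γ a b) (hd : p ∣ a ^ 2 - b ^ 2) : p ∣ 2 := by
  have hab : p ∣ 2 * (a * b) := by
    rw [show 2 * (a * b) = γ a b - 3 * (a ^ 2 - b ^ 2) by unfold γ; ring]
    exact dvd_sub hγ (hd.mul_left 3)
  exact (hp.dvd_or_dvd hab).resolve_right fun hab =>
    not_isCoprime_of_prime_dvd hp hd hab (isCoprime_sq_sub_sq_mul h)

theorem dvd_two_or_dvd_five_of_dvd_γ_of_dvd_Γ (h : IsCoprime a b) (hp : Prime p)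
    (hγ : p ∣ γ a b) (hΓ : p ∣ Γ a b) : p ∣ 2 ∨ p ∣ 5 := by
  have key : p ∣ 5 ^ 2 * (a ^ 2 - b ^ 2) ^ 3 := by
    rw [Γ_eq_γ_mul_add, dvd_add_right (hγ.mul_right _)] at hΓ
    exact hΓ
  rw [hp.dvd_mul, hp.dvd_pow_iff_dvd two_ne_zero, hp.dvd_pow_iff_dvd three_ne_zero] at key
  exact key.symm.imp_left (dvd_two_of_dvd_γ_of_dvd_sq_sub_sq h hp hγ)

theorem dvd_two_or_dvd_five_or_dvd_seventeen (h : IsCoprime a b) (hp : Prime p)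
    (hα : p ∣ α a b) (hΓ : p ∣ Γ a b) : p ∣ 2 ∨ p ∣ 5 ∨ p ∣ 17 := by
  have hb : ¬ p ∣ b := fun hb => not_isCoprime_of_prime_dvd hp hα hb (isCoprime_α_right h)
  have key : p ∣ 2 ^ 3 * (5 * 17 ^ 2) * b ^ 7 := by
    rw [show 2 ^ 3 * (5 * 17 ^ 2) * b ^ 7 = α a b * (8 * 484 * b ^ 5 + (22 * a + 31 * b) *
        (43 * a ^ 4 + 48 * a ^ 3 * b - 124 * a ^ 2 * b ^ 2 - 128 * a * b ^ 3 + 205 * b ^ 4)) -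
        Γ a b * (22 * a + 31 * b) by unfold α Γ; ring]
    exact dvd_sub (hα.mul_right _) (hΓ.mul_right _)
  rw [hp.dvd_mul, hp.dvd_mul, hp.dvd_mul, hp.dvd_pow_iff_dvd three_ne_zero,
    hp.dvd_pow_iff_dvd two_ne_zero, hp.dvd_pow_iff_dvd (by norm_num)] at key
  exact key.resolve_right hb

theorem not_twentyfive_dvd_γ (h : IsCoprime a b) : ¬ 5 ^ 2 ∣ γ a b := by
  have key : (3 * a + b) ^ 2 = 3 * γ a b + 5 * (2 * b ^ 2) := by unfold γ; ring
  intro hγ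
  have h5 : 5 ∣ 3 * a + b := prime_five.dvd_of_dvd_pow (n := 2) (by lia)
  have hb : 5 ∣ 2 * b ^ 2 := by have := pow_dvd_pow_of_dvd h5 2; lia
  have hb : 5 ∣ b := prime_five.dvd_of_dvd_pow
    ((prime_five.dvd_or_dvd hb).resolve_left (by decide))
  exact not_isCoprime_of_prime_dvd prime_five (by lia) hb h

theorem five_dvd_Γ (h5 : 5 ∣ γ a b) : 5 ∣ Γ a b := by
  rw [Γ_eq_γ_mul_add]
  exact dvd_add (h5.mul_right _) (Dvd.dvd.mul_right (by decide) _)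

theorem not_twentyfive_dvd_Γ (h : IsCoprime a b) (h5 : 5 ∣ γ a b) : ¬ 5 ^ 2 ∣ Γ a b := by
  intro hΓ
  rw [Γ_eq_γ_mul_add, dvd_add_left (dvd_mul_right _ _)] at hΓ
  refine not_twentyfive_dvd_γ h (prime_five.pow_dvd_of_dvd_mul_right 2 (fun hd => ?_) hΓ)
  rw [show 2 * (γ a b ^ 2 - 3 * γ a b * (a ^ 2 - b ^ 2) + 3 * (a ^ 2 - b ^ 2) ^ 2) =
    γ a b * (2 * γ a b - 6 * (a ^ 2 - b ^ 2)) + 6 * (a ^ 2 - b ^ 2) ^ 2 by ring,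
    dvd_add_right (h5.mul_right _)] at hd
  have h5w : 5 ∣ a ^ 2 - b ^ 2 := prime_five.dvd_of_dvd_pow
    ((prime_five.dvd_or_dvd hd).resolve_left (by decide))
  exact absurd (dvd_two_of_dvd_γ_of_dvd_sq_sub_sq h prime_five h5 h5w) (by decide)

theorem five_dvd_γ (hα : 5 ∣ α a b) (hΓ : 5 ∣ Γ a b) : 5 ∣ γ a b := by
  have hres : ∀ a b : ZMod 5, α a b = 0 → Γ a b = 0 → γ a b = 0 := by decide
  rw [ofNat_dvd_iff_intCast_eq_zero] at hα hΓ ⊢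
  exact_mod_cast hres a b (mod_cast hα) (mod_cast hΓ)

set_option maxRecDepth 4000 in
theorem seventeen_dvd_add (hα : 17 ∣ α a b) (hΓ : 17 ∣ Γ a b) : 17 ∣ a + 4 * b := by
  have hres : ∀ a b : ZMod 17, α a b = 0 → Γ a b = 0 → a + 4 * b = 0 := by decide
  rw [ofNat_dvd_iff_intCast_eq_zero] at hα hΓ ⊢
  exact_mod_cast hres a b (mod_cast hα) (mod_cast hΓ)

end CommonPrimes

section OppositeParity

variable {a b r t G z Y : ℤ}

set_option maxRecDepth 10000 in
theorem γ_ne_sq (hodd : ¬ 2 ∣ a + b) : γ a b ≠ r ^ 2 := by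
  have hres : ∀ a b r : ZMod 8, γ a b = r ^ 2 → 4 * (a + b) = 0 := by decide
  intro h
  have h8 : 8 ∣ 4 * (a + b) := by
    rw [ofNat_dvd_iff_intCast_eq_zero]
    exact_mod_cast hres a b r (mod_cast congrArg Int.cast h)
  lia

theorem dvd_seventeen_of_dvd_α {p : ℤ} (h : IsCoprime a b) (hodd : ¬ 2 ∣ a + b)
    (h5 : 5 ∣ γ a b) (hG : Γ a b = 5 * G) (hp : Prime p) (hpα : p ∣ α a b) (hpG : p ∣ G) :
    p ∣ 17 := by
  rcases dvd_two_or_dvd_five_or_dvd_seventeen h hp hpα (hG ▸ hpG.mul_left 5) with h2 | h5' | h17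
  · exact absurd (two_dvd_add_of_two_dvd_α (dvd_of_prime_dvd_prime hp Int.prime_two h2 hpα)) hodd
  · have h5G : 5 ∣ G := dvd_of_prime_dvd_prime hp prime_five h5' hpG
    exact absurd (by rw [hG, sq]; exact mul_dvd_mul_left 5 h5G) (not_twentyfive_dvd_Γ h h5)
  · exact h17

theorem not_three_dvd (h : IsCoprime a b) : ¬ 3 ∣ a ^ 2 + a * b - b ^ 2 := by
  have hres : ∀ a b : ZMod 3, a ^ 2 + a * b - b ^ 2 = 0 → a = 0 ∧ b = 0 := by decide
  intro h3
  have hab := hres a b (mod_cast ofNat_dvd_iff_intCast_eq_zero.1 h3)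
  exact not_isCoprime_of_prime_dvd Int.prime_three (ofNat_dvd_iff_intCast_eq_zero.2 hab.1)
    (ofNat_dvd_iff_intCast_eq_zero.2 hab.2) h

theorem seventeen_dvd_add_of_five_dvd_γ (h : IsCoprime a b) (hodd : ¬ 2 ∣ a + b) (h5 : 5 ∣ γ a b)
    (hG : Γ a b = 5 * G) (hz : α a b * G = z ^ 2) : 17 ∣ a + 4 * b := by
  by_contra h17
  have hcop : IsCoprime (α a b) G := by
    refine isCoprime_of_prime_dvd (fun h0 => (α_pos h).ne' h0.1) fun p hp hpα hpG => h17 ?_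
    have hp17 := dvd_seventeen_of_dvd_α h hodd h5 hG hp hpα hpG
    refine seventeen_dvd_add (dvd_of_prime_dvd_prime hp prime_seventeen hp17 hpα) ?_
    exact hG ▸ (dvd_of_prime_dvd_prime hp prime_seventeen hp17 hpG).mul_left 5
  obtain ⟨-, m, -, rfl⟩ := exists_eq_sq_and_eq_sq (α_pos h) hcop hz
  have hPT : IsCoprime (a ^ 2 - b ^ 2) (a ^ 2 + a * b - b ^ 2) := by
    rw [show a ^ 2 + a * b - b ^ 2 = a * b + (a ^ 2 - b ^ 2) * 1 by ring]
    exact (isCoprime_sq_sub_sq_mul h).add_mul_left_right 1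
  have hP : ¬ 2 ∣ a ^ 2 - b ^ 2 := by
    rw [sq_sub_sq, Int.prime_two.dvd_mul]
    lia
  obtain ⟨n, hn⟩ := CbrtTwo.exists_eq_π₅_mul_sq (m := m) hPT hP (not_three_dvd h)
    (by rw [← hG]; unfold Γ; ring)
  exact h17 (CbrtTwo.seventeen_dvd_of_eq_π₅_mul_sq hn)

set_option maxRecDepth 10000 in
theorem not_seventeen_dvd_Γ₁₇ (hb : ¬ 17 ∣ b) : ¬ 17 ∣ Γ₁₇ t b := by
  have hres : ∀ t b : ZMod 17, Γ₁₇ t b = 0 → b = 0 := by decide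
  rw [ofNat_dvd_iff_intCast_eq_zero] at hb ⊢
  exact fun h => hb (hres t b (mod_cast h))

set_option maxRecDepth 10000 in
-- If `α` is a square then `17 ∣ b (b - 8 t)`, so `Γ₁₇ t b ≡ b ^ 6`, while `5` is not a square.
theorem seventeen_dvd_of_α_eq_sq_of_Γ₁₇_eq {m n : ℤ} (hα : α (17 * t - 4 * b) b = n ^ 2)
    (hΓ : Γ₁₇ t b = 5 * m ^ 2) : 17 ∣ b := by
  have hres : ∀ t b : ZMod 17, b ^ 2 - 8 * t * b = 0 → Γ₁₇ t b = b ^ 6 := by decide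
  have hres' : ∀ b m : ZMod 17, b ^ 6 = 5 * m ^ 2 → b = 0 := by decide
  have hα' : n ^ 2 = 17 * (b ^ 2 - 8 * t * b + 17 * t ^ 2) := by rw [← hα]; unfold α; ring
  obtain ⟨n, rfl⟩ : 17 ∣ n := prime_seventeen.dvd_of_dvd_pow (Dvd.intro _ hα'.symm)
  have h17 : 17 ∣ b ^ 2 - 8 * t * b := ⟨n ^ 2 - t ^ 2, by linarith⟩
  rw [ofNat_dvd_iff_intCast_eq_zero] at h17 ⊢
  refine hres' b m ?_
  rw [← hres t b (mod_cast h17)]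
  exact_mod_cast congrArg Int.cast hΓ

theorem not_seventeen_dvd_add_of_five_dvd_γ (h : IsCoprime a b) (hodd : ¬ 2 ∣ a + b)
    (h5 : 5 ∣ γ a b) (hG : Γ a b = 5 * G) (hz : α a b * G = z ^ 2) : ¬ 17 ∣ a + 4 * b := by
  rintro ⟨t, ht⟩
  obtain rfl : a = 17 * t - 4 * b := by lia
  have hb : ¬ 17 ∣ b := fun hb => not_isCoprime_of_prime_dvd prime_seventeen (by lia) hb h
  have hΓ := Γ_seventeen_mul_sub t b
  obtain ⟨G, rfl⟩ : 17 ^ 2 ∣ G := by lia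
  have hΓ₁₇ : Γ₁₇ t b = 5 * G := by lia
  obtain ⟨z, hz⟩ := exists_eq_sq_of_sq_mul_eq_sq (c := (17 : ℤ)) (by decide)
    (x := α (17 * t - 4 * b) b * G) (by rw [← hz]; ring)
  have hcop : IsCoprime (α (17 * t - 4 * b) b) G := by
    refine isCoprime_of_prime_dvd (fun h0 => (α_pos h).ne' h0.1) fun p hp hpα hpG => ?_
    have hp17 := dvd_seventeen_of_dvd_α h hodd h5 hG hp hpα (hpG.mul_left _)
    refine not_seventeen_dvd_Γ₁₇ hb (t := t) ?_
    exact hΓ₁₇ ▸ (dvd_of_prime_dvd_prime hp prime_seventeen hp17 hpG).mul_left 5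
  obtain ⟨n, m, hn, rfl⟩ := exists_eq_sq_and_eq_sq (α_pos h) hcop hz
  exact hb (seventeen_dvd_of_α_eq_sq_of_Γ₁₇_eq hn hΓ₁₇)

theorem γ_ne_five_mul_sq (h : IsCoprime a b) (hodd : ¬ 2 ∣ a + b)
    (hY : γ a b * (α a b * Γ a b) = Y ^ 2) : γ a b ≠ 5 * r ^ 2 := by
  intro hr
  have h5 : 5 ∣ γ a b := Dvd.intro _ hr.symm
  have hr0 : 5 * r ≠ 0 := by
    refine mul_ne_zero (by decide) ?_
    rintro rfl
    exact hodd (two_dvd_add_of_two_dvd_γ (by simp [hr]))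
  obtain ⟨G, hG⟩ := five_dvd_Γ h5
  obtain ⟨z, hz⟩ := exists_eq_sq_of_sq_mul_eq_sq hr0 (x := α a b * G)
    (by rw [← hY, hr, hG]; ring)
  exact not_seventeen_dvd_add_of_five_dvd_γ h hodd h5 hG hz
    (seventeen_dvd_add_of_five_dvd_γ h hodd h5 hG hz)

theorem γ_mul_α_mul_Γ_ne_sq (h : IsCoprime a b) (hodd : ¬ 2 ∣ a + b) :
    γ a b * (α a b * Γ a b) ≠ Y ^ 2 := by
  intro hY
  have hprime (p : ℤ) (hp : Prime p) (hγ : p ∣ γ a b) (hαΓ : p ∣ α a b * Γ a b) : p ∣ 5 := by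
    have hp25 : p ∣ 2 ∨ p ∣ 5 := (hp.dvd_or_dvd hαΓ).elim
      (dvd_two_or_dvd_five_of_dvd_α_of_dvd_γ h hp · hγ)
      (dvd_two_or_dvd_five_of_dvd_γ_of_dvd_Γ h hp hγ)
    exact hp25.resolve_left fun h2 =>
      hodd (two_dvd_add_of_two_dvd_γ (dvd_of_prime_dvd_prime hp Int.prime_two h2 hγ))
  have hodd' : ¬ 2 ∣ -b + a := by lia
  have hY' : γ (-b) a * (α (-b) a * Γ (-b) a) = Y ^ 2 := by
    rw [α_neg_left, γ_neg_left, Γ_neg_left, ← hY]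
    ring
  obtain ⟨r, (hr | hr) | hr | hr⟩ :=
    eq_sq_or_eq_prime_mul_sq prime_five (not_twentyfive_dvd_γ h) hprime hY
  · exact γ_ne_sq hodd hr
  · exact γ_ne_sq hodd' (by rw [γ_neg_left, hr, neg_neg])
  · exact γ_ne_five_mul_sq h hodd hY hr
  · exact γ_ne_five_mul_sq h.symm.neg_left hodd' hY' (by rw [γ_neg_left, hr, neg_neg])

end OppositeParity

section OddOdd

variable {p q r Y : ℤ}

theorem isCoprime_of_isCoprime_sub_add (h : IsCoprime (p - q) (p + q)) : IsCoprime p q := by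
  obtain ⟨u, v, huv⟩ := h
  exact ⟨u + v, v - u, by linear_combination huv⟩

theorem not_two_dvd_add_of_isCoprime_sub_add (h : IsCoprime (p - q) (p + q)) : ¬ 2 ∣ p + q :=
  fun h2 => not_isCoprime_of_prime_dvd Int.prime_two (by lia) h2 h

set_option maxRecDepth 10000 in
theorem γ'_ne_five_mul_sq (hodd : ¬ 2 ∣ p + q) : γ' p q ≠ 5 * r ^ 2 := by
  have hres : ∀ p q r : ZMod 8, γ' p q = 5 * r ^ 2 → 4 * (p + q) = 0 := by decide
  intro h
  have h8 : 8 ∣ 4 * (p + q) := by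
    rw [ofNat_dvd_iff_intCast_eq_zero]
    exact_mod_cast hres p q r (mod_cast congrArg Int.cast h)
  lia

theorem two_dvd_of_γ'_eq_sq (hr : γ' p q = r ^ 2) : 2 ∣ q := by
  have hres : ∀ p q r : ZMod 4, γ' p q = r ^ 2 → 2 * q = 0 := by decide
  have h4 : 4 ∣ 2 * q := by
    rw [ofNat_dvd_iff_intCast_eq_zero]
    exact_mod_cast hres p q r (mod_cast congrArg Int.cast hr)
  lia

theorem seventeen_dvd_of_γ_eq_two_mul_sq {a b : ℤ} (h : 17 ∣ a + 4 * b) (hr : γ a b = 2 * r ^ 2) :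
    17 ∣ b := by
  have hres : ∀ b r : ZMod 17, γ (-4 * b) b = 2 * r ^ 2 → b = 0 := by decide
  rw [ofNat_dvd_iff_intCast_eq_zero] at h ⊢
  push_cast at h
  refine hres b r ?_
  rw [neg_mul, ← eq_neg_of_add_eq_zero_left h]
  exact_mod_cast congrArg Int.cast hr

theorem isCoprime_α_Γ' (h : IsCoprime (p - q) (p + q)) (hr : γ' p q = r ^ 2) :
    IsCoprime (α p q) (Γ' p q) := by
  have hγ : γ (p - q) (p + q) = 2 * r ^ 2 := by rw [γ_sub_add, hr]
  have hα {l : ℤ} (hl : l ∣ α p q) : l ∣ α (p - q) (p + q) := α_sub_add p q ▸ hl.mul_left 2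
  have hΓ {l : ℤ} (hl : l ∣ Γ' p q) : l ∣ Γ (p - q) (p + q) := Γ_sub_add p q ▸ hl.mul_left 16
  refine isCoprime_of_prime_dvd
    (fun h0 => (α_pos (isCoprime_of_isCoprime_sub_add h)).ne' h0.1) fun l hl hlα hlΓ => ?_
  have lift {s : ℤ} (hs : Prime s) (hls : l ∣ s) :
      s ∣ α p q ∧ s ∣ α (p - q) (p + q) ∧ s ∣ Γ (p - q) (p + q) :=
    have hsα := dvd_of_prime_dvd_prime hl hs hls hlα
    ⟨hsα, hα hsα, hΓ (dvd_of_prime_dvd_prime hl hs hls hlΓ)⟩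
  rcases dvd_two_or_dvd_five_or_dvd_seventeen h hl (hα hlα) (hΓ hlΓ) with h2 | h5 | h17
  · exact not_two_dvd_add_of_isCoprime_sub_add h
      (two_dvd_add_of_two_dvd_α (lift Int.prime_two h2).1)
  · obtain ⟨-, h5α, h5Γ⟩ := lift prime_five h5
    have h5γ := five_dvd_γ h5α h5Γ
    rw [hγ] at h5γ
    have h5r : 5 ∣ r := prime_five.dvd_of_dvd_pow
      ((prime_five.dvd_or_dvd h5γ).resolve_left (by decide))
    exact not_twentyfive_dvd_γ h (hγ ▸ (pow_dvd_pow_of_dvd h5r 2).mul_left 2)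
  · obtain ⟨-, h17α, h17Γ⟩ := lift prime_seventeen h17
    have h17' := seventeen_dvd_add h17α h17Γ
    have h17q := seventeen_dvd_of_γ_eq_two_mul_sq h17' hγ
    exact not_isCoprime_of_prime_dvd prime_seventeen (by lia) h17q h

theorem eq_zero_of_γ'_eq_sq (h : IsCoprime (p - q) (p + q)) (hr : γ' p q = r ^ 2)
    (hY : γ' p q * (α p q * Γ' p q) = Y ^ 2) : q = 0 := by
  have hpq := isCoprime_of_isCoprime_sub_add h
  have hodd := not_two_dvd_add_of_isCoprime_sub_add h
  have hr0 : r ≠ 0 := by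
    rintro rfl
    exact hodd (two_dvd_add_of_two_dvd_γ' (by simp [hr]))
  obtain ⟨z, hz⟩ := exists_eq_sq_of_sq_mul_eq_sq hr0 (hr ▸ hY)
  obtain ⟨-, m, -, hm⟩ := exists_eq_sq_and_eq_sq (α_pos hpq) (isCoprime_α_Γ' h hr) hz
  have hq := two_dvd_of_γ'_eq_sq hr
  exact CbrtTwo.eq_zero_of_cube_sub_eq_sq hpq (by lia) hq hm

theorem eq_zero_or_eq_zero (h : IsCoprime (p - q) (p + q))
    (hY : γ' p q * (α p q * Γ' p q) = Y ^ 2) : p = 0 ∨ q = 0 := by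
  have hodd := not_two_dvd_add_of_isCoprime_sub_add h
  have hprime (l : ℤ) (hl : Prime l) (hγ : l ∣ γ' p q) (hαΓ : l ∣ α p q * Γ' p q) : l ∣ 5 := by
    have hγ' : l ∣ γ (p - q) (p + q) := γ_sub_add p q ▸ hγ.mul_left 2
    have hl25 : l ∣ 2 ∨ l ∣ 5 := (hl.dvd_or_dvd hαΓ).elim
      (fun hα => dvd_two_or_dvd_five_of_dvd_α_of_dvd_γ h hl (α_sub_add p q ▸ hα.mul_left 2) hγ')
      (fun hΓ => dvd_two_or_dvd_five_of_dvd_γ_of_dvd_Γ h hl hγ' (Γ_sub_add p q ▸ hΓ.mul_left 16))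
    exact hl25.resolve_left fun h2 =>
      hodd (two_dvd_add_of_two_dvd_γ' (dvd_of_prime_dvd_prime hl Int.prime_two h2 hγ))
  have h25 : ¬ 5 ^ 2 ∣ γ' p q := fun hd =>
    not_twentyfive_dvd_γ h (γ_sub_add p q ▸ hd.mul_left 2)
  have h' : IsCoprime (-q - p) (-q + p) := by
    rw [← neg_add', neg_add_eq_sub, add_comm]
    exact h.symm.neg_left
  have hodd' := not_two_dvd_add_of_isCoprime_sub_add h'
  obtain ⟨r, (hr | hr) | hr | hr⟩ := eq_sq_or_eq_prime_mul_sq prime_five h25 hprime hY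
  · exact .inr (eq_zero_of_γ'_eq_sq h hr hY)
  · refine .inl (eq_zero_of_γ'_eq_sq h' (r := r) (Y := Y) (by rw [γ'_neg_left, hr, neg_neg]) ?_)
    rw [α_neg_left, γ'_neg_left, Γ'_neg_left, ← hY]
    ring
  · exact absurd hr (γ'_ne_five_mul_sq hodd)
  · exact absurd (by rw [γ'_neg_left, hr, neg_neg]) (γ'_ne_five_mul_sq hodd' (r := r))

end OddOdd

theorem eq_or_eq_neg_of_isCoprime {a b Y : ℤ} (h : IsCoprime a b)
    (hY : γ a b * (α a b * Γ a b) = Y ^ 2) : a = b ∨ a = -b := by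
  by_cases hodd : 2 ∣ a + b
  · obtain ⟨p, hp⟩ := hodd
    obtain ⟨q, rfl⟩ : ∃ q, b = p + q := ⟨b - p, by ring⟩
    obtain rfl : a = p - q := by lia
    obtain ⟨k, hk⟩ := exists_eq_sq_of_sq_mul_eq_sq (c := (8 : ℤ)) (by decide)
      (x := γ' p q * (α p q * Γ' p q))
      (by rw [← hY, α_sub_add, γ_sub_add, Γ_sub_add]; ring)
    rcases eq_zero_or_eq_zero h hk with rfl | rfl
    · right; ring
    · left; ring
  · exact absurd hY (γ_mul_α_mul_Γ_ne_sq h hodd)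

theorem eq_one_or_eq_neg_one {x y : ℚ} (h : y ^ 2 = γ x 1 * (α x 1 * Γ x 1)) :
    x = 1 ∨ x = -1 := by
  have hden : (x.den : ℚ) ≠ 0 := mod_cast x.den_ne_zero
  have hnum : (x.num : ℚ) = x * x.den := (Rat.mul_den_eq_num x).symm
  have hcop : IsCoprime x.num x.den := Int.isCoprime_iff_gcd_eq_one.2 x.reduced
  have hsq : (γ x.num x.den * (α x.num x.den * Γ x.num x.den) : ℤ) = (y * x.den ^ 5) ^ 2 := by
    rw [mul_pow, h]
    push_cast
    rw [hnum]
    unfold α γ Γ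
    ring
  obtain ⟨Y, hY⟩ : ∃ Y : ℤ, (Y : ℚ) = y * x.den ^ 5 :=
    IsIntegrallyClosed.isIntegral_iff.1 (.of_pow two_pos (hsq ▸ isIntegral_algebraMap (R := ℤ)))
  rw [← hY] at hsq
  rcases eq_or_eq_neg_of_isCoprime hcop (mod_cast hsq) with hx | hx
  · left
    exact mul_right_cancel₀ hden (by rw [← hnum, hx]; simp)
  · right
    exact mul_right_cancel₀ hden (by rw [← hnum, hx]; simp)

end GenusFourCurve

/-- The affine rational points of the hyperelliptic curve
`y² = (x² + 1)(3x² + 2x − 3)(43x⁶ + 48x⁵ − 81x⁴ − 80x³ + 81x² + 48x − 43)`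
are exactly `(±1, ±8)`. -/
theorem genus4_curve_points (x y : ℚ) :
    y ^ 2 = (x ^ 2 + 1) * (3 * x ^ 2 + 2 * x - 3) *
      (43 * x ^ 6 + 48 * x ^ 5 - 81 * x ^ 4 - 80 * x ^ 3 + 81 * x ^ 2 + 48 * x - 43) ↔
    (x = 1 ∧ y = 8) ∨ (x = 1 ∧ y = -8) ∨ (x = -1 ∧ y = 8) ∨ (x = -1 ∧ y = -8) := by
  constructor
  · intro h
    have hx : x = 1 ∨ x = -1 := by
      refine GenusFourCurve.eq_one_or_eq_neg_one (y := y) (h.trans ?_)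
      unfold GenusFourCurve.α GenusFourCurve.γ GenusFourCurve.Γ
      ring
    have hy : y = 8 ∨ y = -8 := by
      refine sq_eq_sq_iff_eq_or_eq_neg.1 (h.trans ?_)
      rcases hx with rfl | rfl <;> norm_num
    tauto
  · rintro (⟨rfl, rfl⟩ | ⟨rfl, rfl⟩ | ⟨rfl, rfl⟩ | ⟨rfl, rfl⟩) <;> norm_num
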